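/- arXiv:1401.3403 — 2 statements merged into one kernel-verified Lean document; each statement's English description precedes it below -/
import Mathlib

section
/- For p, q > 1 both odd, the growth series of T'_{p,q} = ⟨x, y, z | x^p = y^q = z⟩ with respect to {x, y, z} equals C_∞(t)·C_p(t)·C_q(t) / (C_p(t) + C_q(t) − C_p(t)·C_q(t)), where C_∞(t) = (1+t)/(1−t) and C_r(t) is the growth polynomial of ℤ/r. -/
open PowerSeries

/-- The growth polynomial of the cyclic group of order `p`. -/
noncomputable def Cpol (p : ℕ) : Polynomial ℚ :=
  1 + ∑ k ∈ Finset.Ioo 0 ((p + 1) / 2), 2 * Polynomial.X ^ k +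
    (if p % 2 = 0 then Polynomial.X ^ (p / 2) else 0)

/-- Word length with respect to a (symmetrized) generating set `S`. -/
noncomputable def wordLength {G : Type*} [Group G] (S : Set G) (g : G) : ℕ :=
  sInf {n : ℕ | ∃ w : List G, w.length = n ∧ (∀ x ∈ w, x ∈ S ∨ x⁻¹ ∈ S) ∧ w.prod = g}

/-- Growth series of a group with respect to a generating set `S`. -/
noncomputable def growthSeries {G : Type*} [Group G] (S : Set G) : PowerSeries ℚ :=
  PowerSeries.mk fun n => (Set.ncard {g : G | wordLength S g = n} : ℚ)

/-- Relations of `T'_{p,q} = ⟨x, y, z | x^p = y^q = z⟩`. -/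
def torusRels (p q : ℕ) : Set (FreeGroup (Fin 3)) :=
  {FreeGroup.of 0 ^ p * (FreeGroup.of 2)⁻¹, FreeGroup.of 1 ^ q * (FreeGroup.of 2)⁻¹}

/-!
The group `T'_{p,q}` is the amalgamated product `ℤ *_ℤ ℤ` along `1 ↦ p` and `1 ↦ q`. In a factor
`ℤ` with generators `1` and `p`, write `n = k p + r` with a residue `r` of least absolute value; for
`p` odd the length of `n` is `|k| + |r|`. Lengths are thus additive along the decomposition of each
factor into the amalgamated subgroup and the transversal of balanced residues, and it follows that
the length of an element of the amalgam is the sum of the lengths of the parts of its normal form.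

Let `A`, `Z`, `Γᵢ` be the growth series of the amalgam, the amalgamated subgroup and the factors.
Splitting off the head of a normal form, or its whole part in the factor `i`, shows that normalized
words without head are counted by `A / Z`, and those that do not start in factor `i` by `A / Γᵢ`.
Sorting the nonempty words by the factor of their first letter gives
`A / Z = 1 + ∑ (A / Z - A / Γᵢ)`.
-/

section LengthSeries

/-- The generating function `∑ₙ #{a | ℓ a = n} tⁿ` of a length function `ℓ`; the coefficient is a
junk `0` wherever the level set is infinite. -/
noncomputable def lengthSeries {α : Type*} (ℓ : α → ℕ) : PowerSeries ℚ :=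
  PowerSeries.mk fun n => (Set.ncard {a | ℓ a = n} : ℚ)

variable {α β : Type*} {ℓ : α → ℕ} {ℓ' : β → ℕ}

lemma lengthSeries_congr (e : α ≃ β) (h : ∀ a, ℓ' (e a) = ℓ a) :
    lengthSeries ℓ = lengthSeries ℓ' := by
  ext n
  have image_level : e '' {a | ℓ a = n} = {b | ℓ' b = n} := by
    ext b
    simp [e.image_eq_preimage_symm, ← h]
  simp only [lengthSeries, coeff_mk, ← image_level, Set.ncard_image_of_injective _ e.injective]

lemma lengthSeries_eq_one [Unique α] (h : ℓ default = 0) : lengthSeries ℓ = 1 := by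
  ext n
  have level : {a | ℓ a = n} = {_a | n = 0} := by
    ext a
    rw [Set.mem_ofPred_eq, Unique.eq_default a, h, Set.mem_ofPred_eq, eq_comm]
  rw [lengthSeries, coeff_mk, level, coeff_one]
  split_ifs with hn <;> simp [hn]

lemma constantCoeff_lengthSeries (a : α) (h : ∀ b, ℓ b = 0 ↔ b = a) :
    constantCoeff (lengthSeries ℓ) = 1 := by
  simp [lengthSeries, h, ← coeff_zero_eq_constantCoeff_apply]

lemma coeff_lengthSeries_subtype (P : α → Prop) (n : ℕ) :
    coeff n (lengthSeries fun a : {a // P a} => ℓ a) = Set.ncard ({a | ℓ a = n} ∩ {a | P a}) := by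
  rw [lengthSeries, coeff_mk, ← Set.ncard_image_of_injective _ Subtype.val_injective]
  congr 2
  ext a
  simp [and_comm]

lemma lengthSeries_subtype_add_subtype_not (hfin : ∀ n, {a | ℓ a = n}.Finite) (P : α → Prop) :
    lengthSeries (fun a : {a // P a} => ℓ a) + lengthSeries (fun a : {a // ¬ P a} => ℓ a) =
      lengthSeries ℓ := by
  ext n
  rw [map_add, coeff_lengthSeries_subtype, coeff_lengthSeries_subtype, lengthSeries, coeff_mk]
  exact_mod_cast Set.ncard_inter_add_ncard_sdiff_eq_ncard _ _ (hfin n)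

lemma lengthSeries_eq_sum_fiber [Fintype β] (f : α → β) (hfin : ∀ n, {a | ℓ a = n}.Finite) :
    lengthSeries ℓ = ∑ b, lengthSeries (fun a : {a // f a = b} => ℓ a) := by
  classical
  ext n
  have card_fiber (b : β) : Set.ncard ({a | ℓ a = n} ∩ {a | f a = b}) =
      ((hfin n).toFinset.filter fun a => f a = b).card := by
    rw [← Set.ncard_coe_finset]
    congr 1
    ext a
    simp
  simp only [map_sum, coeff_lengthSeries_subtype, card_fiber]
  rw [lengthSeries, coeff_mk, Set.ncard_eq_toFinset_card _ (hfin n),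
    Finset.card_eq_sum_card_fiberwise fun a _ => Finset.mem_coe.2 (Finset.mem_univ (f a)),
    Nat.cast_sum]

lemma lengthSeries_prod (hfin : ∀ n, {a | ℓ a = n}.Finite) (hfin' : ∀ n, {b | ℓ' b = n}.Finite) :
    lengthSeries (fun x : α × β => ℓ x.1 + ℓ' x.2) = lengthSeries ℓ * lengthSeries ℓ' := by
  classical
  ext n
  have level_prod : {x : α × β | ℓ x.1 + ℓ' x.2 = n} =
      ((Finset.HasAntidiagonal.antidiagonal n).biUnion
        fun ij => (hfin ij.1).toFinset ×ˢ (hfin' ij.2).toFinset : Finset (α × β)) := by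
    ext ⟨a, b⟩
    simp
  have disjoint_levels : (Finset.HasAntidiagonal.antidiagonal n : Set (ℕ × ℕ)).PairwiseDisjoint
      fun ij : ℕ × ℕ => (hfin ij.1).toFinset ×ˢ (hfin' ij.2).toFinset := by
    refine fun ij _ ij' _ hne => Finset.disjoint_left.2 fun x hx hx' => hne ?_
    simp only [Finset.mem_product, Set.Finite.mem_toFinset, Set.mem_ofPred_eq] at hx hx'
    exact Prod.ext (hx.1.symm.trans hx'.1) (hx.2.symm.trans hx'.2)
  simp only [lengthSeries, coeff_mk, coeff_mul, level_prod, Set.ncard_coe_finset,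
    Finset.card_biUnion disjoint_levels, Finset.card_product, Set.ncard_eq_toFinset_card _ (hfin _),
    Set.ncard_eq_toFinset_card _ (hfin' _), Nat.cast_sum, Nat.cast_mul]

end LengthSeries

section WordLength

variable {G G' : Type*} [Group G] [Group G'] {S : Set G} {S' : Set G'}

lemma wordLength_prod_le {w : List G} (hw : ∀ x ∈ w, x ∈ S ∨ x⁻¹ ∈ S) :
    wordLength S w.prod ≤ w.length :=
  Nat.sInf_le ⟨w, rfl, hw, rfl⟩

lemma exists_list_length_eq_wordLength (hS : Subgroup.closure S = ⊤) (g : G) :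
    ∃ w : List G, w.length = wordLength S g ∧ (∀ x ∈ w, x ∈ S ∨ x⁻¹ ∈ S) ∧ w.prod = g := by
  have hg : g ∈ Submonoid.closure (S ∪ S⁻¹) := by
    rw [← Subgroup.closure_toSubmonoid, hS]
    exact Subgroup.mem_top g
  obtain ⟨w, hw, hprod⟩ := Submonoid.exists_list_of_mem_closure hg
  have attained : {n | ∃ w : List G, w.length = n ∧ (∀ x ∈ w, x ∈ S ∨ x⁻¹ ∈ S) ∧
      w.prod = g}.Nonempty := ⟨w.length, w, rfl, hw, hprod⟩
  exact Nat.sInf_mem attained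

lemma wordLength_one : wordLength S 1 = 0 :=
  Nat.le_zero.1 (wordLength_prod_le (w := []) (by simp))

lemma wordLength_eq_zero_iff (hS : Subgroup.closure S = ⊤) {g : G} :
    wordLength S g = 0 ↔ g = 1 := by
  refine ⟨fun h => ?_, fun h => h ▸ wordLength_one⟩
  obtain ⟨w, hlength, -, rfl⟩ := exists_list_length_eq_wordLength hS g
  rw [List.length_eq_zero_iff.1 (hlength.trans h), List.prod_nil]

lemma wordLength_mul_le (hS : Subgroup.closure S = ⊤) (g h : G) :
    wordLength S (g * h) ≤ wordLength S g + wordLength S h := by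
  obtain ⟨v, hv, hvS, rfl⟩ := exists_list_length_eq_wordLength hS g
  obtain ⟨w, hw, hwS, rfl⟩ := exists_list_length_eq_wordLength hS h
  rw [← hv, ← hw, ← List.prod_append, ← List.length_append]
  exact wordLength_prod_le (List.forall_mem_append.2 ⟨hvS, hwS⟩)

lemma wordLength_zpow_le {s : G} (hs : s ∈ S) (k : ℤ) : wordLength S (s ^ k) ≤ k.natAbs := by
  obtain ⟨n, rfl | rfl⟩ := k.eq_nat_or_neg
  · have := wordLength_prod_le (w := List.replicate n s) (S := S) (by simp +contextual [hs])
    simpa using this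
  · have := wordLength_prod_le (w := List.replicate n s⁻¹) (S := S) (by simp +contextual [hs])
    simpa using this

lemma wordLength_mul_left_lipschitz (hS : Subgroup.closure S = ⊤) {s : G} (hs : s ∈ S) (g : G) :
    wordLength S (s * g) ≤ wordLength S g + 1 ∧ wordLength S g ≤ wordLength S (s * g) + 1 := by
  have hs_le : wordLength S s ≤ 1 := by simpa using wordLength_zpow_le hs 1
  have hs_inv_le : wordLength S s⁻¹ ≤ 1 := by simpa using wordLength_zpow_le hs (-1)
  have h_mul := wordLength_mul_le hS s g
  have h_inv_mul := wordLength_mul_le hS s⁻¹ (s * g)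
  rw [inv_mul_cancel_left] at h_inv_mul
  omega

lemma le_wordLength (hS : Subgroup.closure S = ⊤) {ℓ : G → ℕ} (h_one : ℓ 1 = 0)
    (h_mul : ∀ s ∈ S, ∀ g, ℓ (s * g) ≤ ℓ g + 1 ∧ ℓ g ≤ ℓ (s * g) + 1) (g : G) :
    ℓ g ≤ wordLength S g := by
  obtain ⟨w, hw, hwS, rfl⟩ := exists_list_length_eq_wordLength hS g
  rw [← hw]
  clear hw
  induction w with
  | nil => simp [h_one]
  | cons s w ih =>
    obtain ⟨hs, hwS⟩ := List.forall_mem_cons.1 hwS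
    have step : ℓ (s * w.prod) ≤ ℓ w.prod + 1 := by
      rcases hs with hs | hs
      · exact (h_mul s hs _).1
      · simpa using (h_mul _ hs (s * w.prod)).2
    rw [List.prod_cons, List.length_cons]
    exact step.trans (Nat.succ_le_succ (ih hwS))

lemma wordLength_map_le (hS : Subgroup.closure S = ⊤) (f : G →* G') (hf : Set.MapsTo f S S')
    (g : G) : wordLength S' (f g) ≤ wordLength S g := by
  obtain ⟨w, hw, hwS, rfl⟩ := exists_list_length_eq_wordLength hS g
  rw [← hw, map_list_prod, ← w.length_map f]
  refine wordLength_prod_le (List.forall_mem_map.2 fun x hx => ?_)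
  exact (hwS x hx).imp (@hf x) fun h => by simpa using hf h

lemma finite_setOf_wordLength_eq (hS : Subgroup.closure S = ⊤) (hfin : S.Finite) (n : ℕ) :
    {g | wordLength S g = n}.Finite := by
  have : Finite {x | x ∈ S ∨ x⁻¹ ∈ S} := (hfin.union (hfin.preimage inv_injective.injOn)).to_subtype
  refine ((List.finite_length_eq {x | x ∈ S ∨ x⁻¹ ∈ S} n).image
    fun w => (w.map Subtype.val).prod).subset ?_
  rintro g rfl
  obtain ⟨w, hw, hwS, hprod⟩ := exists_list_length_eq_wordLength hS g
  lift w to List {x | x ∈ S ∨ x⁻¹ ∈ S} using hwS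
  exact ⟨w, by simpa using hw, hprod⟩

lemma constantCoeff_growthSeries (hS : Subgroup.closure S = ⊤) :
    constantCoeff (growthSeries S) = 1 :=
  constantCoeff_lengthSeries 1 fun _ => wordLength_eq_zero_iff hS

lemma growthSeries_image_mulEquiv (hS : Subgroup.closure S = ⊤) (e : G ≃* G') :
    growthSeries (e '' S) = growthSeries S := by
  have closure_image : Subgroup.closure (e '' S) = ⊤ := by
    rw [← MulEquiv.coe_toMonoidHom, ← MonoidHom.map_closure, hS, ← MonoidHom.range_eq_map,
      MonoidHom.range_eq_top]
    exact e.surjective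
  refine (lengthSeries_congr e.toEquiv fun g => le_antisymm ?_ ?_).symm
  · exact wordLength_map_le hS e.toMonoidHom (Set.mapsTo_image e S) g
  · have := wordLength_map_le closure_image e.symm.toMonoidHom (S' := S)
      (by rintro _ ⟨s, hs, rfl⟩; simpa using hs) (e g)
    simpa using this

end WordLength

open Monoid (CoprodI PushoutI)
open Monoid.PushoutI (NormalWord)

section Amalgam

variable {ι : Type*} {G : ι → Type*} {H : Type*} [∀ i, Group (G i)] [Group H]
  {φ : ∀ i, H →* G i}

/-- The generating set of the amalgamated product formed by generating sets of the factors. -/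
def amalgamGenerators (φ : ∀ i, H →* G i) (S : ∀ i, Set (G i)) : Set (PushoutI φ) :=
  ⋃ i, PushoutI.of i '' S i

/-- The amalgamated subgroup is admissible in the sense of Alonso and Lewin: length in each factor
is additive along the decomposition of the factor into the subgroup and the transversal `d`. The
lengths `ℓ` on the subgroup are those it inherits from any factor, as `1` lies in the
transversal. -/
def IsAdmissible (d : NormalWord.Transversal φ) (S : ∀ i, Set (G i)) (ℓ : H → ℕ) : Prop :=
  ∀ i h, ∀ u ∈ d.set i, wordLength (S i) (φ i h * u) = ℓ h + wordLength (S i) u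

/-- The sum of the lengths of the letters of a reduced word. -/
noncomputable def syllableLength (S : ∀ i, Set (G i)) (w : CoprodI.Word G) : ℕ :=
  (w.toList.map fun s => wordLength (S s.1) s.2).sum

/-- Reduced words all of whose letters belong to the transversal `d`; a normal word is such a word
preceded by an element of the amalgamated subgroup. -/
abbrev NormalizedWord (d : NormalWord.Transversal φ) : Type _ :=
  {w : CoprodI.Word G // ∀ i g, ⟨i, g⟩ ∈ w.toList → g ∈ d.set i}

variable {d : NormalWord.Transversal φ} {S : ∀ i, Set (G i)} {ℓ : H → ℕ}

/-- The length of a normal word: the sum of the lengths of its head and of its letters. -/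
noncomputable def normalLength (S : ∀ i, Set (G i)) (ℓ : H → ℕ) (w : NormalWord d) : ℕ :=
  ℓ w.head + syllableLength S w.toWord

/-- A normal word consists of a head in the amalgamated subgroup and a normalized word. -/
def normalWordEquivProd (d : NormalWord.Transversal φ) : NormalWord d ≃ H × NormalizedWord d where
  toFun w := (w.head, ⟨w.toWord, w.normalized⟩)
  invFun x := ⟨x.2.1, x.1, x.2.2⟩

/-- A normal word consists of an element of the `i`-th factor and a normalized word that does not
start in this factor. -/
noncomputable def normalWordEquivFactorProd [DecidableEq ι] [∀ i, DecidableEq (G i)]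
    (d : NormalWord.Transversal φ) (i : ι) :
    NormalWord d ≃ G i × {w : NormalizedWord d // w.1.fstIdx ≠ some i} :=
  (NormalWord.equivPair i).trans
    { toFun := fun P => (P.head, ⟨⟨P.tail, P.normalized⟩, P.fstIdx_ne⟩)
      invFun := fun x => ⟨⟨x.1, x.2.1.1, x.2.2⟩, x.2.1.2⟩ }

lemma closure_amalgamGenerators [Nonempty ι] (hS : ∀ i, Subgroup.closure (S i) = ⊤) :
    Subgroup.closure (amalgamGenerators φ S) = ⊤ := by
  have of_mem (i : ι) (g : G i) :
      PushoutI.of i g ∈ Subgroup.closure (amalgamGenerators φ S) := by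
    have : g ∈ Subgroup.closure (S i) := hS i ▸ Subgroup.mem_top g
    have := Subgroup.mem_map_of_mem (PushoutI.of (φ := φ) i) this
    rw [MonoidHom.map_closure] at this
    exact Subgroup.closure_mono (Set.subset_iUnion (fun i => PushoutI.of i '' S i) i) this
  refine eq_top_iff.2 fun g _ => ?_
  induction g using PushoutI.induction_on with
  | of i g => exact of_mem i g
  | base h => exact PushoutI.of_apply_eq_base φ (Classical.arbitrary ι) h ▸ of_mem _ _
  | mul x y hx hy => exact mul_mem (hx trivial) (hy trivial)

lemma syllableLength_rcons [∀ i, DecidableEq (G i)] {i : ι} (P : CoprodI.Word.Pair G i) :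
    syllableLength S (CoprodI.Word.rcons P) =
      wordLength (S i) P.head + syllableLength S P.tail := by
  rw [CoprodI.Word.rcons]
  split_ifs with h
  · rw [h, wordLength_one, zero_add]
  · simp [syllableLength]

lemma IsAdmissible.wordLength_base (hd : IsAdmissible d S ℓ) (i : ι) (h : H) :
    wordLength (S i) (φ i h) = ℓ h := by
  simpa [wordLength_one] using hd i h 1 (d.one_mem i)

lemma IsAdmissible.normalLength_equivFactorProd_symm [DecidableEq ι] [∀ i, DecidableEq (G i)]
    (hd : IsAdmissible d S ℓ) (i : ι) (x : G i × {w : NormalizedWord d // w.1.fstIdx ≠ some i}) :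
    normalLength S ℓ ((normalWordEquivFactorProd d i).symm x) =
      wordLength (S i) x.1 + syllableLength S x.2.1.1 := by
  obtain ⟨g, w, hw⟩ := x
  have split_head := hd i ((MonoidHom.ofInjective (d.injective i)).symm ((d.compl i).equiv g).1) _
    ((d.compl i).equiv g).2.2
  rw [MonoidHom.apply_ofInjective_symm, Subgroup.IsComplement.equiv_fst_mul_equiv_snd] at split_head
  rw [split_head, add_assoc]
  exact congrArg (_ + ·) (syllableLength_rcons _)

lemma wordLength_of_le (hS : ∀ i, Subgroup.closure (S i) = ⊤) (i : ι) (g : G i) :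
    wordLength (amalgamGenerators φ S) (PushoutI.of i g) ≤ wordLength (S i) g :=
  wordLength_map_le (hS i) _
    (fun _ hs => Set.mem_iUnion_of_mem i (Set.mem_image_of_mem _ hs)) g

lemma wordLength_ofCoprodI_prod_le [Nonempty ι] (hS : ∀ i, Subgroup.closure (S i) = ⊤)
    (w : CoprodI.Word G) :
    wordLength (amalgamGenerators φ S) (PushoutI.ofCoprodI w.prod) ≤ syllableLength S w := by
  induction w using CoprodI.Word.consRecOn with
  | empty => simp [wordLength_one]
  | cons i g w hw hg ih =>
    rw [CoprodI.Word.prod_cons, map_mul, PushoutI.ofCoprodI_of]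
    refine (wordLength_mul_le (closure_amalgamGenerators hS) _ _).trans ?_
    simpa [syllableLength] using add_le_add (wordLength_of_le hS i g) ih

lemma IsAdmissible.wordLength_prod_le [Nonempty ι] (hd : IsAdmissible d S ℓ)
    (hS : ∀ i, Subgroup.closure (S i) = ⊤) (w : NormalWord d) :
    wordLength (amalgamGenerators φ S) w.prod ≤ normalLength S ℓ w := by
  refine (wordLength_mul_le (closure_amalgamGenerators hS) _ _).trans
    (add_le_add ?_ (wordLength_ofCoprodI_prod_le hS _))
  obtain ⟨i⟩ := ‹Nonempty ι›
  rw [← PushoutI.of_apply_eq_base φ i, ← hd.wordLength_base i]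
  exact wordLength_of_le hS i _

lemma IsAdmissible.normalLength_of_smul [DecidableEq ι] [∀ i, DecidableEq (G i)]
    (hd : IsAdmissible d S ℓ) (hS : ∀ i, Subgroup.closure (S i) = ⊤) {i : ι} {s : G i}
    (hs : s ∈ S i) (w : NormalWord d) :
    normalLength S ℓ (PushoutI.of (φ := φ) i s • w) ≤ normalLength S ℓ w + 1 ∧
      normalLength S ℓ w ≤ normalLength S ℓ (PushoutI.of (φ := φ) i s • w) + 1 := by
  obtain ⟨⟨g, v⟩, rfl⟩ := (normalWordEquivFactorProd d i).symm.surjective w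
  have smul_eq : PushoutI.of (φ := φ) i s • (normalWordEquivFactorProd d i).symm (g, v) =
      (normalWordEquivFactorProd d i).symm (s * g, v) := by
    rw [NormalWord.summand_smul_def]
    simp [normalWordEquivFactorProd]
  rw [smul_eq, hd.normalLength_equivFactorProd_symm, hd.normalLength_equivFactorProd_symm]
  have := wordLength_mul_left_lipschitz (hS i) hs g
  dsimp only
  omega

theorem IsAdmissible.wordLength_prod [Nonempty ι] (hd : IsAdmissible d S ℓ)
    (hS : ∀ i, Subgroup.closure (S i) = ⊤) (w : NormalWord d) :
    wordLength (amalgamGenerators φ S) w.prod = normalLength S ℓ w := by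
  classical
  refine le_antisymm (hd.wordLength_prod_le hS w) ?_
  -- The action of a generator on normal words changes `normalLength` by at most one.
  have := le_wordLength (closure_amalgamGenerators hS)
    (ℓ := fun g => normalLength S ℓ (g • (NormalWord.empty : NormalWord d))) ?_ ?_ w.prod
  · simpa only [NormalWord.prod_smul_empty] using this
  · obtain ⟨i⟩ := ‹Nonempty ι›
    simp [normalLength, syllableLength, ← hd.wordLength_base i, wordLength_one]
  · simp only [amalgamGenerators, Set.mem_iUnion]
    rintro _ ⟨i, s, hs, rfl⟩ g
    rw [mul_smul]
    exact hd.normalLength_of_smul hS hs _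

lemma IsAdmissible.growthSeries_eq_lengthSeries_normalLength [Nonempty ι]
    (hd : IsAdmissible d S ℓ) (hS : ∀ i, Subgroup.closure (S i) = ⊤) :
    growthSeries (amalgamGenerators φ S) = lengthSeries (normalLength (d := d) S ℓ) := by
  classical
  exact (lengthSeries_congr (NormalWord.equiv (d := d)).symm (hd.wordLength_prod hS)).symm

lemma IsAdmissible.finite_setOf_base_eq [Nonempty ι] (hd : IsAdmissible d S ℓ)
    (hS : ∀ i, Subgroup.closure (S i) = ⊤) (hfin : ∀ i, (S i).Finite) (n : ℕ) :
    {h | ℓ h = n}.Finite := by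
  obtain ⟨i⟩ := ‹Nonempty ι›
  simp only [← hd.wordLength_base i]
  exact (finite_setOf_wordLength_eq (hS i) (hfin i) n).preimage (d.injective i).injOn

lemma IsAdmissible.finite_setOf_syllableLength_eq [Finite ι] [Nonempty ι]
    (hd : IsAdmissible d S ℓ) (hS : ∀ i, Subgroup.closure (S i) = ⊤) (hfin : ∀ i, (S i).Finite)
    (n : ℕ) : {w : NormalizedWord d | syllableLength S w.1 = n}.Finite := by
  classical
  have finite_generators : (amalgamGenerators φ S).Finite :=
    Set.finite_iUnion fun i => (hfin i).image _
  have finite_level := finite_setOf_wordLength_eq (closure_amalgamGenerators hS) finite_generators n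
  have injective_prod : Function.Injective
      fun w : NormalizedWord d => ((normalWordEquivProd d).symm (1, w)).prod :=
    (NormalWord.equiv.symm.injective.comp (normalWordEquivProd d).symm.injective).comp
      (Prod.mk_right_injective 1)
  have length_one : ℓ 1 = 0 := by
    simp [← hd.wordLength_base (Classical.arbitrary ι), wordLength_one]
  convert finite_level.preimage injective_prod.injOn using 1
  ext w
  simp [hd.wordLength_prod hS, normalLength, length_one, normalWordEquivProd]

lemma IsAdmissible.constantCoeff_lengthSeries_base [Nonempty ι] (hd : IsAdmissible d S ℓ)
    (hS : ∀ i, Subgroup.closure (S i) = ⊤) : constantCoeff (lengthSeries ℓ) = 1 := by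
  obtain ⟨i⟩ := ‹Nonempty ι›
  refine constantCoeff_lengthSeries 1 fun h => ?_
  rw [← hd.wordLength_base i, wordLength_eq_zero_iff (hS i), map_eq_one_iff _ (d.injective i)]

lemma IsAdmissible.growthSeries_eq_base_mul [Finite ι] [Nonempty ι] (hd : IsAdmissible d S ℓ)
    (hS : ∀ i, Subgroup.closure (S i) = ⊤) (hfin : ∀ i, (S i).Finite) :
    growthSeries (amalgamGenerators φ S) =
      lengthSeries ℓ * lengthSeries fun w : NormalizedWord d => syllableLength S w.1 := by
  rw [hd.growthSeries_eq_lengthSeries_normalLength hS, ← lengthSeries_prod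
    (hd.finite_setOf_base_eq hS hfin) (hd.finite_setOf_syllableLength_eq hS hfin)]
  exact lengthSeries_congr (normalWordEquivProd d) fun _ => rfl

lemma IsAdmissible.growthSeries_eq_factor_mul [Finite ι] (hd : IsAdmissible d S ℓ)
    (hS : ∀ i, Subgroup.closure (S i) = ⊤) (hfin : ∀ i, (S i).Finite) (i : ι) :
    growthSeries (amalgamGenerators φ S) = growthSeries (S i) *
      lengthSeries fun w : {w : NormalizedWord d // w.1.fstIdx ≠ some i} =>
        syllableLength S w.1.1 := by
  classical
  have : Nonempty ι := ⟨i⟩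
  have finite_level (n : ℕ) : {w : {w : NormalizedWord d // w.1.fstIdx ≠ some i} |
      syllableLength S w.1.1 = n}.Finite :=
    (hd.finite_setOf_syllableLength_eq hS hfin n).preimage Subtype.val_injective.injOn
  rw [hd.growthSeries_eq_lengthSeries_normalLength hS]
  refine Eq.trans ?_ (lengthSeries_prod (finite_setOf_wordLength_eq (hS i) (hfin i)) finite_level)
  exact (lengthSeries_congr (normalWordEquivFactorProd d i).symm
    (hd.normalLength_equivFactorProd_symm i)).symm

lemma IsAdmissible.growthSeries_factor (hd : IsAdmissible d S ℓ)
    (hS : ∀ i, Subgroup.closure (S i) = ⊤) (hfin : ∀ i, (S i).Finite) (i : ι) :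
    growthSeries (S i) =
      lengthSeries ℓ * lengthSeries fun u : d.set i => wordLength (S i) u.1 := by
  have : Nonempty ι := ⟨i⟩
  have finite_level (n : ℕ) : {u : d.set i | wordLength (S i) u.1 = n}.Finite :=
    (finite_setOf_wordLength_eq (hS i) (hfin i) n).preimage Subtype.val_injective.injOn
  rw [← lengthSeries_prod (hd.finite_setOf_base_eq hS hfin) finite_level]
  refine (lengthSeries_congr (((MonoidHom.ofInjective (d.injective i)).toEquiv.prodCongr
    (.refl _)).trans (d.compl i).equiv.symm) fun x => ?_).symm
  exact hd i x.1 x.2 x.2.2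

lemma fstIdx_eq_none_iff {w : CoprodI.Word G} : w.fstIdx = none ↔ w = .empty := by
  simp [CoprodI.Word.fstIdx, CoprodI.Word.ext_iff]

lemma lengthSeries_normalizedWord_eq_one_add_sum [Fintype ι]
    (hW : ∀ n, {w : NormalizedWord d | syllableLength S w.1 = n}.Finite) :
    (lengthSeries fun w : NormalizedWord d => syllableLength S w.1) =
      1 + ∑ i, lengthSeries fun w : {w : NormalizedWord d // w.1.fstIdx = some i} =>
        syllableLength S w.1.1 := by
  have : Unique {w : NormalizedWord d // w.1.fstIdx = none} :=
    { default := ⟨⟨.empty, by simp⟩, fstIdx_eq_none_iff.2 rfl⟩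
      uniq := fun w => Subtype.ext (Subtype.ext (fstIdx_eq_none_iff.1 w.2)) }
  rw [lengthSeries_eq_sum_fiber (fun w : NormalizedWord d => w.1.fstIdx) hW, Fintype.sum_option,
    lengthSeries_eq_one]
  rw [fstIdx_eq_none_iff.1 (default : {w : NormalizedWord d // w.1.fstIdx = none}).2]
  simp [syllableLength]

theorem IsAdmissible.inv_growthSeries [Fintype ι] [Nonempty ι] (hd : IsAdmissible d S ℓ)
    (hS : ∀ i, Subgroup.closure (S i) = ⊤) (hfin : ∀ i, (S i).Finite) :
    (growthSeries (amalgamGenerators φ S))⁻¹ =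
      (lengthSeries ℓ)⁻¹ - ∑ i, ((lengthSeries ℓ)⁻¹ - (growthSeries (S i))⁻¹) := by
  have finite_level := hd.finite_setOf_syllableLength_eq hS hfin
  have base : (lengthSeries fun w : NormalizedWord d => syllableLength S w.1) =
      (lengthSeries ℓ)⁻¹ * growthSeries (amalgamGenerators φ S) := by
    rw [hd.growthSeries_eq_base_mul hS hfin, ← mul_assoc, PowerSeries.inv_mul_cancel, one_mul]
    simp [hd.constantCoeff_lengthSeries_base hS]
  have factor (i : ι) : (lengthSeries fun w : {w : NormalizedWord d // w.1.fstIdx ≠ some i} =>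
      syllableLength S w.1.1) = (growthSeries (S i))⁻¹ * growthSeries (amalgamGenerators φ S) := by
    rw [hd.growthSeries_eq_factor_mul hS hfin i, ← mul_assoc, PowerSeries.inv_mul_cancel, one_mul]
    simp [constantCoeff_growthSeries (hS i)]
  have count := lengthSeries_normalizedWord_eq_one_add_sum finite_level
  simp only [fun i => eq_sub_of_add_eq (lengthSeries_subtype_add_subtype_not finite_level
    fun w => w.1.fstIdx = some i), ← ne_eq, factor, base, ← sub_mul, ← Finset.sum_mul] at count
  rw [eq_comm, PowerSeries.eq_inv_iff_mul_eq_one, sub_mul]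
  · exact sub_eq_of_eq_add count
  · simp [constantCoeff_growthSeries (closure_amalgamGenerators hS)]

end Amalgam

open Multiplicative (ofAdd toAdd)

section BalancedDivision

variable {c : ℕ}

lemma two_mul_natAbs_bmod_lt (hc : Odd c) (n : ℤ) : 2 * (n.bmod c).natAbs < c := by
  have := Int.le_bmod (x := n) hc.pos
  have := Int.bmod_lt (x := n) hc.pos
  obtain ⟨m, rfl⟩ := hc
  omega

lemma bmod_mul_add {k r : ℤ} (hr : 2 * r.natAbs < c) : (k * c + r).bmod c = r := by
  rw [Int.mul_add_bmod_self_right, Int.bmod_eq_of_le_mul_two] <;> omega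

lemma bdiv_mul_add {k r : ℤ} (hr : 2 * r.natAbs < c) : (k * c + r).bdiv c = k := by
  have := Int.bdiv_add_bmod' (k * c + r) c
  rw [bmod_mul_add hr, add_left_inj] at this
  exact mul_right_cancel₀ (by omega) this

/-- The length of an integer over the generators `1` and `c` of `ℤ`: the balanced quotient counts
the uses of `c`, and the balanced remainder those of `1`. -/
def balancedLength (c : ℕ) (n : ℤ) : ℕ := (n.bdiv c).natAbs + (n.bmod c).natAbs

lemma balancedLength_mul_add {k r : ℤ} (hr : 2 * r.natAbs < c) :
    balancedLength c (k * c + r) = k.natAbs + r.natAbs := by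
  rw [balancedLength, bdiv_mul_add hr, bmod_mul_add hr]

lemma exists_eq_mul_add (hc : Odd c) (n : ℤ) : ∃ k r : ℤ, 2 * r.natAbs < c ∧ n = k * c + r :=
  ⟨n.bdiv c, n.bmod c, two_mul_natAbs_bmod_lt hc n, (Int.bdiv_add_bmod' n c).symm⟩

lemma balancedLength_one_add (hc : Odd c) (n : ℤ) :
    balancedLength c (1 + n) ≤ balancedLength c n + 1 ∧
      balancedLength c n ≤ balancedLength c (1 + n) + 1 := by
  obtain ⟨k, r, hr, rfl⟩ := exists_eq_mul_add hc n
  rw [balancedLength_mul_add hr]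
  by_cases no_carry : 2 * (r + 1).natAbs < c
  · have : 1 + (k * c + r) = k * c + (r + 1) := by ring
    rw [this, balancedLength_mul_add no_carry]
    omega
  · -- Adding `1` to the largest residue `r = (c - 1) / 2` carries, and the new residue is `-r`.
    have : 1 + (k * c + r) = (k + 1) * c + -r := by
      have : (c : ℤ) = 2 * r + 1 := by obtain ⟨m, rfl⟩ := hc; omega
      rw [this]
      ring
    rw [this, balancedLength_mul_add (by simpa using hr)]
    omega

lemma balancedLength_self_add (hc : Odd c) (n : ℤ) :
    balancedLength c (c + n) ≤ balancedLength c n + 1 ∧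
      balancedLength c n ≤ balancedLength c (c + n) + 1 := by
  obtain ⟨k, r, hr, rfl⟩ := exists_eq_mul_add hc n
  have : c + (k * c + r) = (k + 1) * c + r := by ring
  rw [this, balancedLength_mul_add hr, balancedLength_mul_add hr]
  omega

/-- The generators `1` and `c` of `ℤ`, written multiplicatively. -/
def cyclicGenerators (c : ℕ) : Set (Multiplicative ℤ) := {ofAdd 1, ofAdd (c : ℤ)}

lemma finite_cyclicGenerators : (cyclicGenerators c).Finite :=
  Set.toFinite {_, _}

lemma closure_cyclicGenerators : Subgroup.closure (cyclicGenerators c) = ⊤ := by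
  refine eq_top_iff.2 fun n _ => ?_
  have one_mem : ofAdd 1 ∈ Subgroup.closure (cyclicGenerators c) :=
    Subgroup.subset_closure (Set.mem_insert _ _)
  simpa [← ofAdd_zsmul] using zpow_mem one_mem (toAdd n)

lemma balancedLength_zero (hc : Odd c) : balancedLength c 0 = 0 := by
  simpa using balancedLength_mul_add (k := 0) (r := 0) (by simpa using hc.pos)

lemma wordLength_cyclicGenerators (hc : Odd c) (n : Multiplicative ℤ) :
    wordLength (cyclicGenerators c) n = balancedLength c (toAdd n) := by
  refine le_antisymm ?_ (le_wordLength closure_cyclicGenerators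
    (ℓ := fun n => balancedLength c (toAdd n)) (balancedLength_zero hc) ?_ n)
  · have decomposition : n = ofAdd (c : ℤ) ^ (toAdd n).bdiv c * ofAdd 1 ^ (toAdd n).bmod c := by
      rw [← ofAdd_zsmul, ← ofAdd_zsmul, ← ofAdd_add, smul_eq_mul, smul_eq_mul, mul_one,
        Int.bdiv_add_bmod', ofAdd_toAdd]
    conv_lhs => rw [decomposition]
    exact (wordLength_mul_le closure_cyclicGenerators _ _).trans (add_le_add
      (wordLength_zpow_le (.inr rfl) _) (wordLength_zpow_le (.inl rfl) _))
  · rintro _ (rfl | rfl) g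
    · exact balancedLength_one_add hc (toAdd g)
    · exact balancedLength_self_add hc (toAdd g)

lemma wordLength_pow_mul_of_balanced (hc : Odd c) (k : Multiplicative ℤ) {u : Multiplicative ℤ}
    (hu : 2 * (toAdd u).natAbs < c) :
    wordLength (cyclicGenerators c) (k ^ c * u) = (toAdd k).natAbs + (toAdd u).natAbs := by
  rw [wordLength_cyclicGenerators hc, ← balancedLength_mul_add hu, toAdd_mul, toAdd_pow,
    nsmul_eq_mul, mul_comm]

lemma wordLength_of_balanced (hc : Odd c) {u : Multiplicative ℤ} (hu : 2 * (toAdd u).natAbs < c) :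
    wordLength (cyclicGenerators c) u = (toAdd u).natAbs := by
  simpa using wordLength_pow_mul_of_balanced hc 1 hu

lemma isComplement_range_powMonoidHom (hc : Odd c) :
    Subgroup.IsComplement ((powMonoidHom c : Multiplicative ℤ →* Multiplicative ℤ).range : Set _)
      {u : Multiplicative ℤ | 2 * (toAdd u).natAbs < c} := by
  refine ⟨?_, fun n => ?_⟩
  · rintro ⟨⟨_, k, rfl⟩, u, hu⟩ ⟨⟨_, k', rfl⟩, u', hu'⟩ h
    have h : toAdd k * c + toAdd u = toAdd k' * c + toAdd u' := by
      simpa [mul_comm (c : ℤ)] using congrArg toAdd h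
    have k_eq : k = k' := by
      have := congrArg (Int.bdiv · c) h
      exact toAdd.injective (by simpa only [bdiv_mul_add hu, bdiv_mul_add hu'] using this)
    have u_eq : u = u' := by
      have := congrArg (Int.bmod · c) h
      exact toAdd.injective (by simpa only [bmod_mul_add hu, bmod_mul_add hu'] using this)
    subst k_eq u_eq
    rfl
  · obtain ⟨k, r, hr, hn⟩ := exists_eq_mul_add hc (toAdd n)
    refine ⟨(⟨_, ofAdd k, rfl⟩, ⟨ofAdd r, hr⟩), toAdd.injective ?_⟩
    simp [hn, mul_comm (c : ℤ)]

end BalancedDivision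

section BalancedSeries

lemma ncard_setOf_natAbs_eq (n : ℕ) : {k : ℤ | k.natAbs = n}.ncard = if n = 0 then 1 else 2 := by
  have level : {k : ℤ | k.natAbs = n} = {(n : ℤ), -(n : ℤ)} := by
    ext k
    exact Int.natAbs_eq_iff
  split_ifs with hn
  · simp [hn]
  · rw [level, Set.ncard_pair]
    omega

lemma one_sub_X_mul_lengthSeries_natAbs : (1 - X) * lengthSeries Int.natAbs = 1 + X := by
  ext n
  rw [sub_mul, one_mul, map_sub, map_add, lengthSeries]
  rcases n with _ | _ | n <;> simp [coeff_succ_X_mul, ncard_setOf_natAbs_eq, coeff_one, coeff_X]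
  norm_num

lemma lengthSeries_balanced {c : ℕ} (hc : Odd c) :
    (lengthSeries fun k : {k : ℤ // 2 * k.natAbs < c} => k.1.natAbs) =
      (Cpol c : PowerSeries ℚ) := by
  ext n
  have card_level : ({k : ℤ | k.natAbs = n} ∩ {k | 2 * k.natAbs < c}).ncard =
      if n = 0 then 1 else if 2 * n < c then 2 else 0 := by
    have level : {k : ℤ | k.natAbs = n} ∩ {k | 2 * k.natAbs < c} =
        if 2 * n < c then {k : ℤ | k.natAbs = n} else ∅ := by
      ext k
      split_ifs with hn <;> simp <;> omega
    rw [level, apply_ite Set.ncard, ncard_setOf_natAbs_eq, Set.ncard_empty]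
    have := hc.pos
    split_ifs <;> omega
  have coeff_monomial (k : ℕ) :
      (2 * Polynomial.X ^ k : Polynomial ℚ).coeff n = if n = k then 2 else 0 :=
    Polynomial.coeff_C_mul_X_pow 2 k n
  have mem_range : n ∈ Finset.Ioo 0 ((c + 1) / 2) ↔ n ≠ 0 ∧ 2 * n < c := by
    obtain ⟨m, rfl⟩ := hc
    rw [Finset.mem_Ioo]
    omega
  have not_even : ¬ c % 2 = 0 := by simpa [Nat.odd_iff] using hc
  rw [coeff_lengthSeries_subtype, card_level, Polynomial.coeff_coe, Cpol, if_neg not_even, add_zero,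
    Polynomial.coeff_add, Polynomial.coeff_one,
    Polynomial.finsetSum_coeff]
  simp only [coeff_monomial, Finset.sum_ite_eq, mem_range]
  split_ifs <;> simp_all

lemma Cpol_mul_inv {c : ℕ} (hc : Odd c) :
    (Cpol c : PowerSeries ℚ) * (Cpol c : PowerSeries ℚ)⁻¹ = 1 := by
  refine PowerSeries.mul_inv_cancel _ ?_
  rw [← lengthSeries_balanced hc, constantCoeff_lengthSeries ⟨0, by simpa using hc.pos⟩]
  · exact one_ne_zero
  · simp [Subtype.ext_iff]

end BalancedSeries

section CyclicAmalgam

variable {ι : Type*} {c : ι → ℕ}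

/-- The inclusions `ℤ → ℤ`, `1 ↦ cᵢ`, whose amalgamated product is
`⟨xᵢ, z | xᵢ ^ cᵢ = z for all i⟩`. -/
abbrev powInclusions (c : ι → ℕ) (i : ι) : Multiplicative ℤ →* Multiplicative ℤ :=
  powMonoidHom (c i)

/-- The transversal of the subgroups `cᵢℤ` of `ℤ` formed by the residues of least absolute
value. -/
def balancedTransversal (hc : ∀ i, Odd (c i)) : NormalWord.Transversal (powInclusions c) where
  injective i := pow_left_injective (hc i).pos.ne'
  set i := {u | 2 * (toAdd u).natAbs < c i}
  one_mem i := by simpa using (hc i).pos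
  compl i := isComplement_range_powMonoidHom (hc i)

lemma isAdmissible_balancedTransversal (hc : ∀ i, Odd (c i)) :
    IsAdmissible (balancedTransversal hc) (fun i => cyclicGenerators (c i))
      fun k => (toAdd k).natAbs := by
  intro i k u hu
  rw [wordLength_of_balanced (hc i) hu]
  exact wordLength_pow_mul_of_balanced (hc i) k hu

lemma inv_growthSeries_cyclicAmalgam [Fintype ι] [Nonempty ι] (hc : ∀ i, Odd (c i)) :
    (growthSeries (amalgamGenerators (powInclusions c) fun i => cyclicGenerators (c i)))⁻¹ =
      (lengthSeries Int.natAbs)⁻¹ * (1 - ∑ i, (1 - (Cpol (c i) : PowerSeries ℚ)⁻¹)) := by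
  have hd := isAdmissible_balancedTransversal hc
  have base : (lengthSeries fun k : Multiplicative ℤ => (toAdd k).natAbs) =
      lengthSeries Int.natAbs := lengthSeries_congr toAdd fun _ => rfl
  have factor (i : ι) : growthSeries (cyclicGenerators (c i)) =
      lengthSeries Int.natAbs * (Cpol (c i) : PowerSeries ℚ) := by
    rw [hd.growthSeries_factor (fun _ => closure_cyclicGenerators)
      (fun _ => finite_cyclicGenerators) i, base, ← lengthSeries_balanced (hc i)]
    congr 1
    refine lengthSeries_congr (toAdd.subtypeEquiv fun _ => Iff.rfl) fun u => ?_
    exact (wordLength_of_balanced (hc i) u.2).symm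
  rw [hd.inv_growthSeries (fun _ => closure_cyclicGenerators) fun _ => finite_cyclicGenerators,
    base, mul_sub, mul_one, Finset.mul_sum]
  simp only [factor, PowerSeries.mul_inv_rev, mul_sub, mul_one, mul_comm]

theorem one_sub_X_mul_growthSeries_cyclicAmalgam [Fintype ι] [Nonempty ι] (hc : ∀ i, Odd (c i)) :
    (1 - X) * growthSeries (amalgamGenerators (powInclusions c) fun i => cyclicGenerators (c i)) *
      (1 - ∑ i, (1 - (Cpol (c i) : PowerSeries ℚ)⁻¹)) = 1 + X := by
  have growth := inv_growthSeries_cyclicAmalgam hc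
  set A := growthSeries (amalgamGenerators (powInclusions c) fun i => cyclicGenerators (c i))
  set D := 1 - ∑ i, (1 - (Cpol (c i) : PowerSeries ℚ)⁻¹)
  set Z := lengthSeries Int.natAbs
  have A_inv : A * A⁻¹ = 1 := PowerSeries.mul_inv_cancel A <| by
    rw [constantCoeff_growthSeries (closure_amalgamGenerators fun _ => closure_cyclicGenerators)]
    exact one_ne_zero
  have Z_inv : Z * Z⁻¹ = 1 := PowerSeries.mul_inv_cancel Z <| by
    simp [Z, constantCoeff_lengthSeries 0 fun _ => Int.natAbs_eq_zero]
  calc (1 - X) * A * D = (1 - X) * A * (Z * Z⁻¹) * D := by rw [Z_inv, mul_one]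
    _ = (1 - X) * Z * (A * (Z⁻¹ * D)) := by ring
    _ = (1 - X) * Z := by rw [← growth, A_inv, mul_one]
    _ = 1 + X := one_sub_X_mul_lengthSeries_natAbs

end CyclicAmalgam

section TorusGroup

variable {p q : ℕ}

lemma of_zero_pow_eq_of_two :
    (PresentedGroup.of 0 : PresentedGroup (torusRels p q)) ^ p = PresentedGroup.of 2 :=
  PresentedGroup.mk_eq_mk_of_mul_inv_mem (x := FreeGroup.of 0 ^ p) (.inl rfl)

lemma of_one_pow_eq_of_two :
    (PresentedGroup.of 1 : PresentedGroup (torusRels p q)) ^ q = PresentedGroup.of 2 :=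
  PresentedGroup.mk_eq_mk_of_mul_inv_mem (x := FreeGroup.of 1 ^ q) (.inr rfl)

/-- The homomorphism from the amalgamated product onto the torus link group, sending the generators
of the two factors to `x` and `y`. -/
def amalgamToTorus (p q : ℕ) :
    PushoutI (powInclusions (cond · p q)) →* PresentedGroup (torusRels p q) :=
  PushoutI.lift (fun b => zpowersHom _ (PresentedGroup.of (cond b 0 1)))
    (zpowersHom _ (PresentedGroup.of 2)) <| by
      rintro (_ | _) <;> refine MonoidHom.ext_mint ?_
      · simpa using of_one_pow_eq_of_two
      · simpa using of_zero_pow_eq_of_two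

/-- The inverse of `amalgamToTorus`, sending `x` and `y` to the generators of the two factors and
`z` to the generator of the amalgamated subgroup. -/
def torusToAmalgam (p q : ℕ) :
    PresentedGroup (torusRels p q) →* PushoutI (powInclusions (cond · p q)) :=
  PresentedGroup.toGroup (f := ![PushoutI.of true (ofAdd 1), PushoutI.of false (ofAdd 1),
    PushoutI.base _ (ofAdd 1)]) <| by
      rintro _ (rfl | rfl)
      · simp [← PushoutI.of_apply_eq_base (powInclusions (cond · p q)) true]
      · simp [← PushoutI.of_apply_eq_base (powInclusions (cond · p q)) false]

/-- The torus link group is the amalgamated product of two infinite cyclic groups. -/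
def amalgamEquivTorus (p q : ℕ) :
    PushoutI (powInclusions (cond · p q)) ≃* PresentedGroup (torusRels p q) := by
  refine MonoidHom.toMulEquiv (amalgamToTorus p q) (torusToAmalgam p q)
    (PushoutI.hom_ext (fun b => MonoidHom.ext_mint ?_) (MonoidHom.ext_mint ?_))
    (PresentedGroup.ext fun i => ?_)
  · cases b <;> simp [amalgamToTorus, torusToAmalgam]
  · simp [amalgamToTorus, torusToAmalgam]
  · fin_cases i <;> simp [amalgamToTorus, torusToAmalgam]

lemma amalgamEquivTorus_image_amalgamGenerators :
    amalgamEquivTorus p q '' amalgamGenerators (powInclusions (cond · p q))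
      (fun b => cyclicGenerators (cond b p q)) =
      {PresentedGroup.of 0, PresentedGroup.of 1, PresentedGroup.of 2} := by
  have apply_of (b : Bool) (n : ℤ) : amalgamEquivTorus p q (PushoutI.of b (ofAdd n)) =
      PresentedGroup.of (cond b 0 1) ^ n := by
    simp [amalgamEquivTorus, amalgamToTorus]
  simp only [amalgamGenerators, cyclicGenerators, Set.image_iUnion, Set.image_pair, apply_of]
  ext g
  simp only [Set.mem_iUnion, Bool.exists_bool, cond_true, cond_false, zpow_one, zpow_natCast,
    of_zero_pow_eq_of_two, of_one_pow_eq_of_two, Set.mem_insert_iff, Set.mem_singleton_iff]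
  tauto

end TorusGroup

/-- For `p, q > 1` both odd, the growth series `A` of `T'_{p,q}` with respect to
`{x, y, z}` satisfies `A = C_∞ C_p C_q / (C_p + C_q - C_p C_q)`, i.e.
`(1-t)(C_p + C_q - C_p C_q) A = (1+t) C_p C_q`. -/
theorem stmt_10 (p q : ℕ) (hp : 1 < p) (hq : 1 < q) (hpo : Odd p) (hqo : Odd q) :
    (1 - PowerSeries.X) *
        ((Cpol p : PowerSeries ℚ) + (Cpol q : PowerSeries ℚ) -
          (Cpol p : PowerSeries ℚ) * (Cpol q : PowerSeries ℚ)) *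
        growthSeries ({PresentedGroup.of 0, PresentedGroup.of 1, PresentedGroup.of 2} :
          Set (PresentedGroup (torusRels p q))) =
      (1 + PowerSeries.X) * (Cpol p : PowerSeries ℚ) * (Cpol q : PowerSeries ℚ) := by
  have hc (b : Bool) : Odd (cond b p q) := by cases b <;> assumption
  have growth := one_sub_X_mul_growthSeries_cyclicAmalgam hc
  rw [← growthSeries_image_mulEquiv (closure_amalgamGenerators fun _ => closure_cyclicGenerators)
    (amalgamEquivTorus p q), amalgamEquivTorus_image_amalgamGenerators] at growth
  simp only [Fintype.sum_bool, cond_true, cond_false] at growth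
  set A := growthSeries ({PresentedGroup.of 0, PresentedGroup.of 1, PresentedGroup.of 2} :
    Set (PresentedGroup (torusRels p q)))
  linear_combination (Cpol p : PowerSeries ℚ) * (Cpol q : PowerSeries ℚ) * growth -
    (1 - X) * A * ((Cpol q : PowerSeries ℚ) * Cpol_mul_inv hpo +
      (Cpol p : PowerSeries ℚ) * Cpol_mul_inv hqo)
end

section
/- For any p, q > 1, the growth series of T'_{p,q} = ⟨x, y, z | x^p = y^q = z⟩ with respect to {x, y, z} equals C_∞(t)·C_p(t)·C_q(t)/(C_p(t)+C_q(t)−C_p(t)C_q(t)) + (m_q(t)·C_p(t)² + m_p(t)·C_q(t)²)/(C_p(t)+C_q(t)−C_p(t)C_q(t))², where m_r(t) = t^{r/2} if r is even and 0 if r is odd. -/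
open PowerSeries

/-- `m_r(t) = t^{r/2}` if `r` is even, `0` if `r` is odd. -/
noncomputable def mser (r : ℕ) : PowerSeries ℚ :=
  if r % 2 = 0 then PowerSeries.X ^ (r / 2) else 0

/-!
`T'_{p,q}` is a central extension of `ℤ/p * ℤ/q` by `⟨z⟩ ≅ ℤ`, so every element is uniquely
`w z ^ k`, where `w` is an alternating product of powers of `x` and `y` whose exponents are the
representatives of least absolute value modulo `p` and `q`. An exponent equal to exactly half the
order absorbs a factor `z⁻¹` for free, since `x ^ (p / 2) z⁻¹ = x ^ (-p / 2)`. Hence, if `w` has `h`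
such exponents, the length of `w z ^ k` is `|w|` plus the distance from `k` to `[-h, 0]`.

Summing `t ^ length` over `k` turns the contribution of `w` into `t ^ |w| (C_∞ + h(w))`, so the
growth series is `C_∞ F + M` with `F = ∑ t ^ |w|` and `M = ∑ h(w) t ^ |w|`. Splitting off the first
letter of a word gives `F (C_p + C_q - C_p C_q) = C_p C_q` for any multiplicative weight on the
letters. Over the dual numbers with the weights `(1 + h ε) t ^ |a|`, the `ε`-part of this identity
determines `M`.
-/

namespace TorusGrowth

open Monoid TrivSqZeroExt
open Filter (TendstoCofinite tendstoCofinite_iff_finite_preimage_singleton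
  tendstoCofinite_of_injective)
open scoped PowerSeries.WithPiTopology DualNumber

/-! ### Word length -/

section WordLength

variable {G : Type*} [Group G] {S : Set G} {m n : ℕ} {g h : G}

/-- `g` is a product of `n` elements of `S ∪ S⁻¹`; the word length of `g` is the least such `n`. -/
def HasWord (S : Set G) (n : ℕ) (g : G) : Prop :=
  ∃ w : List G, w.length = n ∧ (∀ x ∈ w, x ∈ S ∨ x⁻¹ ∈ S) ∧ w.prod = g

lemma HasWord.mul (hg : HasWord S m g) (hh : HasWord S n h) : HasWord S (m + n) (g * h) := by
  obtain ⟨v, rfl, hv, rfl⟩ := hg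
  obtain ⟨w, rfl, hw, rfl⟩ := hh
  exact ⟨v ++ w, List.length_append,
    fun x hx => (List.mem_append.1 hx).elim (hv x) (hw x), List.prod_append⟩

lemma HasWord.zpow (hg : g ∈ S) (k : ℤ) : HasWord S k.natAbs (g ^ k) := by
  obtain ⟨n, rfl | rfl⟩ := k.eq_nat_or_neg
  · exact ⟨List.replicate n g, by simp,
      fun x hx => .inl (List.eq_of_mem_replicate hx ▸ hg), by simp⟩
  · refine ⟨List.replicate n g⁻¹, by simp, fun x hx => .inr ?_, by simp⟩
    rwa [List.eq_of_mem_replicate hx, inv_inv]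

lemma exists_hasWord (hS : Subgroup.closure S = ⊤) (g : G) : ∃ n, HasWord S n g := by
  have hg : g ∈ Subgroup.closure S := hS ▸ Subgroup.mem_top g
  rw [← Subgroup.mem_toSubmonoid, Subgroup.closure_toSubmonoid] at hg
  obtain ⟨w, hw, hprod⟩ := Submonoid.exists_list_of_mem_closure hg
  exact ⟨w.length, w, rfl, hw, hprod⟩

lemma hasWord_wordLength (hS : Subgroup.closure S = ⊤) (g : G) : HasWord S (wordLength S g) g :=
  Nat.sInf_mem (exists_hasWord hS g)

lemma finite_setOf_hasWord (hS : S.Finite) (n : ℕ) : {g | HasWord S n g}.Finite := by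
  have : Finite ↥(S ∪ S⁻¹) := hS.union hS.inv
  refine ((List.finite_length_eq ↥(S ∪ S⁻¹) n).image fun l => (l.map (↑)).prod).subset ?_
  rintro g ⟨w, hlen, hw, rfl⟩
  lift w to List ↥(S ∪ S⁻¹) using hw
  exact ⟨w, by simpa using hlen, rfl⟩

lemma tendstoCofinite_wordLength (hfin : S.Finite) (hS : Subgroup.closure S = ⊤) :
    TendstoCofinite (wordLength S) :=
  (tendstoCofinite_iff_finite_preimage_singleton _).2 fun n =>
    (finite_setOf_hasWord hfin n).subset fun g hg => Set.mem_singleton_iff.1 hg ▸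
      hasWord_wordLength hS g

lemma exists_le_of_hasWord {α : Type*} {eval : α → G} {len : α → ℕ}
    (hone : ∃ a, eval a = 1 ∧ len a = 0)
    (hstep : ∀ s, s ∈ S ∨ s⁻¹ ∈ S → ∀ a, ∃ b, eval b = s * eval a ∧ len b ≤ len a + 1)
    (hg : HasWord S n g) : ∃ a, eval a = g ∧ len a ≤ n := by
  obtain ⟨w, rfl, hw, rfl⟩ := hg
  induction w with
  | nil => simpa using hone
  | cons s w ih =>
    rw [List.forall_mem_cons] at hw
    obtain ⟨a, ha, hlen⟩ := ih hw.2
    obtain ⟨b, hb, hlen'⟩ := hstep s hw.1 a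
    exact ⟨b, by rw [hb, ha, List.prod_cons], hlen'.trans (Nat.succ_le_succ hlen)⟩

end WordLength

/-! ### Summable families of monomials -/

section Monomials

variable {α R : Type*}

lemma summable_natCast_mul_X_pow [Semiring R] [TopologicalSpace R] (c ℓ : α → ℕ)
    [TendstoCofinite ℓ] : Summable fun a => (c a : R⟦X⟧) * X ^ ℓ a := by
  rw [PowerSeries.WithPiTopology.summable_iff_summable_coeff]
  intro n
  refine summable_of_hasFiniteSupport
    ((TendstoCofinite.finite_preimage_singleton ℓ n).subset fun a ha => ?_)
  by_contra hne
  refine ha ?_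
  simp only [← map_natCast (PowerSeries.C (R := R)), coeff_C_mul, coeff_X_pow, if_neg (Ne.symm hne),
    mul_zero]

lemma summable_X_pow [Semiring R] [TopologicalSpace R] (ℓ : α → ℕ) [TendstoCofinite ℓ] :
    Summable fun a => (X : R⟦X⟧) ^ ℓ a := by
  simpa using summable_natCast_mul_X_pow (R := R) (fun _ => 1) ℓ

lemma hasSum_growthSeries {G : Type*} [Group G] (S : Set G) [TendstoCofinite (wordLength S)] :
    HasSum (fun g => (X : ℚ⟦X⟧) ^ wordLength S g) (growthSeries S) := by
  rw [PowerSeries.WithPiTopology.hasSum_iff_hasSum_coeff]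
  intro n
  have hfin : {g | wordLength S g = n}.Finite :=
    TendstoCofinite.finite_preimage_singleton (wordLength S) n
  have hcoeff : coeff n (growthSeries S) =
      ∑ g ∈ hfin.toFinset, coeff n ((X : ℚ⟦X⟧) ^ wordLength S g) := by
    rw [growthSeries, coeff_mk, Set.ncard_eq_toFinset_card _ hfin,
      Finset.sum_congr rfl fun g hg => by rw [hfin.mem_toFinset.1 hg, coeff_X_pow_self]]
    simp
  rw [hcoeff]
  refine hasSum_sum_of_ne_finset_zero fun g hg => ?_
  rw [coeff_X_pow, if_neg fun h => hg (hfin.mem_toFinset.2 h.symm)]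

/-- The distance from `k` to the interval `[-n, 0]`. At most one of the two summands is nonzero. -/
def distNegIcc (n : ℕ) (k : ℤ) : ℕ := k.toNat + (-n - k).toNat

lemma hasSum_X_pow [Semiring R] [TopologicalSpace R] :
    HasSum (fun k : ℕ => (X : R⟦X⟧) ^ k) (mk 1) := by
  simpa [X_pow_eq] using PowerSeries.hasSum_of_monomials_self (mk 1 : R⟦X⟧)

lemma hasSum_X_pow_distNegIcc [CommRing R] [TopologicalSpace R] [IsTopologicalRing R] (n : ℕ) :
    HasSum (fun k : ℤ => (X : R⟦X⟧) ^ distNegIcc n k) ((1 + X) * mk 1 + (n : R⟦X⟧)) := by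
  have hnonneg : HasSum (fun k : ℕ => (X : R⟦X⟧) ^ distNegIcc n k) (mk 1) := by
    convert hasSum_X_pow (R := R) using 3 with k
    simp only [distNegIcc]
    omega
  have hneg : HasSum (fun k : ℕ => (X : R⟦X⟧) ^ distNegIcc n (-(k + 1)))
      (X * mk 1 + (n : R⟦X⟧)) := by
    have hinside : ∑ k ∈ Finset.range n, (X : R⟦X⟧) ^ distNegIcc n (-(k + 1)) = n := by
      rw [Finset.sum_congr rfl fun k hk => ?_, Finset.sum_const, Finset.card_range, nsmul_one]
      rw [Finset.mem_range] at hk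
      rw [show distNegIcc n (-(k + 1)) = 0 by simp only [distNegIcc]; omega, pow_zero]
    have hshift : (fun k : ℕ => (X : R⟦X⟧) ^ distNegIcc n (-((k + n : ℕ) + 1))) =
        fun k => X * X ^ k := by
      funext k
      rw [← pow_succ']
      congr 1
      simp only [distNegIcc]
      omega
    rw [← hasSum_nat_add_iff' n, hinside, add_sub_cancel_right, hshift]
    exact HasSum.mul_left X hasSum_X_pow
  rw [show (1 + X) * mk 1 + (n : R⟦X⟧) = mk 1 + (X * mk 1 + (n : R⟦X⟧)) by ring]
  exact HasSum.of_nat_of_neg_add_one (f := fun k => X ^ distNegIcc n k) hnonneg hneg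

end Monomials

/-! ### Weighted enumeration of a free product -/

section FreeProduct

variable {ι : Type*} {M : ι → Type*} [∀ i, Monoid (M i)]

lemma prod_map_rcons [∀ i, DecidableEq (M i)] {N : Type*} [Monoid N] {i : ι}
    {f : (Σ i, M i) → N} (hf : f ⟨i, 1⟩ = 1) (p : CoprodI.Word.Pair M i) :
    ((CoprodI.Word.rcons p).toList.map f).prod =
      f ⟨i, p.head⟩ * (p.tail.toList.map f).prod := by
  unfold CoprodI.Word.rcons
  split_ifs with h <;> simp [h, hf]

lemma sum_map_rcons [∀ i, DecidableEq (M i)] {N : Type*} [AddMonoid N] {i : ι}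
    {f : (Σ i, M i) → N} (hf : f ⟨i, 1⟩ = 0) (p : CoprodI.Word.Pair M i) :
    ((CoprodI.Word.rcons p).toList.map f).sum =
      f ⟨i, p.head⟩ + (p.tail.toList.map f).sum := by
  unfold CoprodI.Word.rcons
  split_ifs with h <;> simp [h, hf]

/-- The reduced words that do not begin with a letter from the factor `i`. -/
abbrev WordAvoiding (M : ι → Type*) [∀ i, Monoid (M i)] (i : ι) : Type _ :=
  {w : CoprodI.Word M // w.fstIdx ≠ some i}

/-- Prepending a possibly trivial letter from the factor `i`. -/
def rconsEquiv [DecidableEq ι] [∀ i, DecidableEq (M i)] (i : ι) :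
    M i × WordAvoiding M i ≃ CoprodI.Word M :=
  Equiv.trans
    { toFun x := ⟨x.1, x.2.1, x.2.2⟩
      invFun p := (p.head, ⟨p.tail, p.fstIdx_ne⟩) }
    (CoprodI.Word.equivPair i).symm

lemma eq_mul_of_hasSum_words {A : Type*} [Ring A] [TopologicalSpace A] [IsTopologicalRing A]
    [T2Space A] {i : ι} {f : (Σ i, M i) → A} {F Q c : A}
    (hf : f ⟨i, 1⟩ = 1)
    (hF : HasSum (fun w : CoprodI.Word M => (w.toList.map f).prod) F)
    (hQ : HasSum (fun w : WordAvoiding M i => (w.1.toList.map f).prod) Q)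
    (hc : HasSum (fun a : M i => f ⟨i, a⟩) c) : F = c * Q := by
  classical
  have hprod : HasSum
      (fun x : M i × WordAvoiding M i => f ⟨i, x.1⟩ * (x.2.1.toList.map f).prod) F := by
    rw [← (rconsEquiv i).hasSum_iff] at hF
    simpa only [Function.comp_def, rconsEquiv, Equiv.trans_apply, Equiv.coe_fn_mk,
      CoprodI.Word.equivPair_symm, prod_map_rcons hf] using hF
  have hfiber : HasSum (fun a => f ⟨i, a⟩ * Q) F :=
    hprod.prod_fiberwise fun a => hQ.mul_left (f ⟨i, a⟩)
  exact hfiber.unique (hc.mul_right Q)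

lemma eq_ite_add_sum_indicator [Fintype ι] [DecidableEq (CoprodI.Word M)] {A : Type*}
    [AddCommMonoid A] (f : CoprodI.Word M → A) (w : CoprodI.Word M) :
    f w = (if w = .empty then f .empty else 0) +
      ∑ i, {v : CoprodI.Word M | v.fstIdx = some i}.indicator f w := by
  classical
  induction w using CoprodI.Word.consRecOn with
  | empty => simp [CoprodI.Word.fstIdx]
  | cons i a w h1 h2 _ =>
    have hne : CoprodI.Word.cons a w h1 h2 ≠ .empty := fun h => by
      simpa using congrArg CoprodI.Word.toList h
    simp [hne, Set.indicator_apply]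

lemma eq_empty_add_sum_of_hasSum [Fintype ι] {A : Type*} [TopologicalSpace A] [AddCommGroup A]
    [IsTopologicalAddGroup A] [T2Space A] {f : CoprodI.Word M → A} {F : A} {Q : ι → A}
    (hF : HasSum f F) (hQ : ∀ i, HasSum (fun w : WordAvoiding M i => f w) (Q i)) :
    F = f .empty + ∑ i, (F - Q i) := by
  classical
  have hstart (i : ι) :
      HasSum ({w : CoprodI.Word M | w.fstIdx = some i}.indicator f) (F - Q i) := by
    have havoid : HasSum ({w : CoprodI.Word M | w.fstIdx = some i}ᶜ.indicator f) (Q i) :=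
      hasSum_subtype_iff_indicator.1 (hQ i)
    convert hF.sub havoid using 1
    simp [Set.indicator_compl]
  have hsum := (hasSum_ite_eq (CoprodI.Word.empty : CoprodI.Word M) (f .empty)).add
    (hasSum_sum fun i (_ : i ∈ Finset.univ) => hstart i)
  simp only [← eq_ite_add_sum_indicator] at hsum
  exact hF.unique hsum

end FreeProduct

lemma mul_eq_mul_of_hasSum_words {M : Bool → Type*} [∀ i, Monoid (M i)] {A : Type*} [CommRing A]
    [TopologicalSpace A] [IsTopologicalRing A] [T2Space A] {f : (Σ i, M i) → A}
    (hf : ∀ i, f ⟨i, 1⟩ = 1) {F : A} {c : Bool → A}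
    (hF : HasSum (fun w : CoprodI.Word M => (w.toList.map f).prod) F)
    (hQ : ∀ i, Summable fun w : WordAvoiding M i => (w.1.toList.map f).prod)
    (hc : ∀ i, HasSum (fun a : M i => f ⟨i, a⟩) (c i)) :
    F * (c false + c true - c false * c true) = c false * c true := by
  classical
  have hletter (i : Bool) : F = c i * _ := eq_mul_of_hasSum_words (hf i) hF (hQ i).hasSum (hc i)
  have hempty := eq_empty_add_sum_of_hasSum hF fun i => (hQ i).hasSum
  simp only [CoprodI.Word.empty_toList, List.map_nil, List.prod_nil, Fintype.sum_bool] at hempty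
  linear_combination c true * hletter false + c false * hletter true + c false * c true * hempty

/-! ### Normal forms in a central extension of a free product of cyclic groups -/

section NormalForm

variable {ι : Type*} {P : ι → ℕ}

/-- A letter of the free product of the cyclic groups `ℤ / P i`. -/
abbrev Letter (P : ι → ℕ) : Type _ := Σ i, Multiplicative (ZMod (P i))

/-- Reduced words, which represent the elements of the free product of the groups `ℤ / P i`. -/
abbrev CyclicWord (P : ι → ℕ) : Type _ := CoprodI.Word fun i => Multiplicative (ZMod (P i))

/-- The representative of least absolute value of a letter, taken in `(-P i / 2, P i / 2]`. -/
def letterExp (s : Letter P) : ℤ := s.2.toAdd.valMinAbs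

/-- `1` if the exponent of the letter is exactly half the order of its factor, and `0` otherwise. -/
def letterHalf (s : Letter P) : ℕ := if letterExp s * 2 = P s.1 then 1 else 0

/-- The total exponent length `|w|` of a list of letters. -/
def expLength (l : List (Letter P)) : ℕ := (l.map fun s => (letterExp s).natAbs).sum

/-- The number `h` of letters of a list whose exponent is half the order of their factor. -/
def halfCount (l : List (Letter P)) : ℕ := (l.map letterHalf).sum

/-- A normal form `w z ^ k`, where `z` is the common power of the generators. -/
abbrev NormalForm (P : ι → ℕ) : Type _ := CyclicWord P × ℤ

/-- The length `|w| + dist(k, [-h, 0])` of the normal form `w z ^ k`. -/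
def normalLength (a : NormalForm P) : ℕ :=
  expLength a.1.toList + distNegIcc (halfCount a.1.toList) a.2

lemma letterExp_one (i : ι) : letterExp (⟨i, 1⟩ : Letter P) = 0 := by simp [letterExp]

lemma letterHalf_one (i : ι) [NeZero (P i)] : letterHalf (⟨i, 1⟩ : Letter P) = 0 := by
  rw [letterHalf, letterExp_one, zero_mul, if_neg]
  exact_mod_cast (NeZero.ne (P i)).symm

lemma exists_letterExp_add (i : ι) (a : Multiplicative (ZMod (P i))) (δ : ℤ) :
    ∃ (b : Multiplicative (ZMod (P i))) (e : ℤ),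
      letterExp ⟨i, a⟩ + δ = letterExp ⟨i, b⟩ + P i * e := by
  let b : ZMod (P i) := (letterExp ⟨i, a⟩ + δ : ℤ)
  obtain ⟨e, he⟩ : (P i : ℤ) ∣ letterExp ⟨i, a⟩ + δ - b.valMinAbs := by
    rw [← ZMod.intCast_eq_intCast_iff_dvd_sub, ZMod.coe_valMinAbs]
  exact ⟨.ofAdd b, e, sub_eq_iff_eq_add'.1 he⟩

lemma natAbs_add_distNegIcc_le {p : ℕ} {a b δ e k : ℤ} (n : ℕ) (ha : a * 2 ∈ Set.Ioc (-p : ℤ) p)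
    (hb : b * 2 ∈ Set.Ioc (-p : ℤ) p) (hδ : δ.natAbs = 1) (he : a + δ = b + p * e) :
    b.natAbs + distNegIcc ((if b * 2 = p then 1 else 0) + n) (k + e) ≤
      a.natAbs + distNegIcc ((if a * 2 = p then 1 else 0) + n) k + 1 := by
  obtain ⟨ha₁, ha₂⟩ := ha
  obtain ⟨hb₁, hb₂⟩ := hb
  have hp : 1 ≤ (p : ℤ) := by omega
  have he' : e = 0 ∨ e = 1 ∨ e = -1 := by
    have : e < 2 := by by_contra! h; nlinarith [show δ ≤ 1 by omega]
    have : -2 < e := by by_contra! h; nlinarith [show -1 ≤ δ by omega]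
    omega
  unfold distNegIcc
  rcases he' with rfl | rfl | rfl <;> split_ifs <;> omega

lemma normalLength_rcons_le {i : ι} [NeZero (P i)]
    (w : CoprodI.Word.Pair (fun i => Multiplicative (ZMod (P i))) i) (k : ℤ)
    {b : Multiplicative (ZMod (P i))} {δ e : ℤ} (hδ : δ.natAbs = 1)
    (he : letterExp ⟨i, w.head⟩ + δ = letterExp ⟨i, b⟩ + P i * e) :
    normalLength (CoprodI.Word.rcons ⟨b, w.tail, w.fstIdx_ne⟩, k + e) ≤
      normalLength (CoprodI.Word.rcons w, k) + 1 := by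
  have hexp := sum_map_rcons (f := fun s : Letter P => (letterExp s).natAbs)
    (Int.natAbs_eq_zero.2 (letterExp_one i))
  have hhalf := sum_map_rcons (f := letterHalf (P := P)) (letterHalf_one i)
  have hle : (letterExp ⟨i, b⟩).natAbs +
        distNegIcc (letterHalf ⟨i, b⟩ + (w.tail.toList.map letterHalf).sum) (k + e) ≤
      (letterExp ⟨i, w.head⟩).natAbs +
        distNegIcc (letterHalf ⟨i, w.head⟩ + (w.tail.toList.map letterHalf).sum) k + 1 :=
    natAbs_add_distNegIcc_le _ (ZMod.valMinAbs_mem_Ioc w.head.toAdd)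
      (ZMod.valMinAbs_mem_Ioc b.toAdd) hδ he
  simp only [normalLength, expLength, halfCount, hexp, hhalf]
  omega

variable {G : Type*} [Group G]

/-- The product of a list of letters, where the factor `i` is generated by `x i`. -/
def evalLetters (x : ι → G) (l : List (Letter P)) : G := (l.map fun s => x s.1 ^ letterExp s).prod

/-- The group element `w z ^ k` given by a normal form. -/
def evalNormal (x : ι → G) (z : G) (a : NormalForm P) : G := evalLetters x a.1.toList * z ^ a.2

variable {x : ι → G} {z : G}

lemma zpow_add_mul (hz : ∀ i, x i ^ P i = z) (i : ι) (a k : ℤ) :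
    x i ^ (a + P i * k) = x i ^ a * z ^ k := by
  rw [zpow_add, zpow_mul, zpow_natCast, hz]

lemma commute_evalLetters (hz : ∀ i, x i ^ P i = z) (l : List (Letter P)) :
    Commute z (evalLetters x l) := by
  refine Commute.list_prod_right _ _ fun g hg => ?_
  obtain ⟨s, -, rfl⟩ := List.mem_map.1 hg
  rw [← hz s.1]
  exact ((Commute.refl (x s.1)).pow_left _).zpow_right _

lemma evalNormal_add (hz : ∀ i, x i ^ P i = z) (w : CyclicWord P) (k e : ℤ) :
    evalNormal x z (w, k + e) = z ^ e * evalNormal x z (w, k) := by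
  simp only [evalNormal]
  rw [← mul_assoc, ((commute_evalLetters hz w.toList).zpow_left e).eq, mul_assoc, ← zpow_add,
    add_comm e]

lemma evalNormal_rcons {i : ι} (w : CoprodI.Word.Pair (fun i => Multiplicative (ZMod (P i))) i)
    (k : ℤ) : evalNormal x z (CoprodI.Word.rcons w, k) =
      x i ^ letterExp ⟨i, w.head⟩ * evalNormal x z (w.tail, k) := by
  have hprod := prod_map_rcons (f := fun s : Letter P => x s.1 ^ letterExp s) (i := i)
    (by rw [letterExp_one, zpow_zero])
  simp only [evalNormal, evalLetters, hprod, mul_assoc]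

lemma hasWord_evalLetters_mul_zpow {S : Set G} (hz : ∀ i, x i ^ P i = z) (hx : ∀ i, x i ∈ S)
    (hzS : z ∈ S) (l : List (Letter P)) (k : ℤ) :
    HasWord S (expLength l + distNegIcc (halfCount l) k) (evalLetters x l * z ^ k) := by
  induction l generalizing k with
  | nil =>
    convert HasWord.zpow hzS k using 1
    · simp only [expLength, halfCount, distNegIcc, List.map_nil, List.sum_nil]
      omega
    · simp [evalLetters]
  | cons s l ih =>
    have heval : evalLetters x (s :: l) = x s.1 ^ letterExp s * evalLetters x l := List.prod_cons
    have hexp : expLength (s :: l) = (letterExp s).natAbs + expLength l := List.sum_cons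
    have hhalf : halfCount (s :: l) = letterHalf s + halfCount l := List.sum_cons
    rw [heval, hexp, hhalf]
    by_cases habsorb : letterExp s * 2 = P s.1 ∧ k < 0
    · have hflip : x s.1 ^ letterExp s = x s.1 ^ (-letterExp s) * z := by
        rw [← zpow_one z, ← zpow_add_mul hz]
        congr 1
        omega
      convert (HasWord.zpow (hx s.1) (-letterExp s)).mul (ih (k + 1)) using 1
      · simp only [letterHalf, if_pos habsorb.1, distNegIcc]
        omega
      · rw [hflip, mul_assoc, mul_assoc, ← mul_assoc z, (commute_evalLetters hz l).eq, mul_assoc,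
          ← zpow_one_add, add_comm 1]
    · rw [mul_assoc]
      convert (HasWord.zpow (hx s.1) (letterExp s)).mul (ih k) using 1
      simp only [letterHalf, distNegIcc]
      split_ifs <;> omega

lemma exists_evalNormal_zpow_mul (hz : ∀ i, x i ^ P i = z) {δ : ℤ} (hδ : δ.natAbs = 1)
    (a : NormalForm P) :
    ∃ b : NormalForm P, evalNormal x z b = z ^ δ * evalNormal x z a ∧
      normalLength b ≤ normalLength a + 1 := by
  refine ⟨(a.1, a.2 + δ), evalNormal_add hz _ _ _, ?_⟩
  simp only [normalLength, distNegIcc]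
  omega

lemma exists_evalNormal_generator_zpow_mul (hz : ∀ i, x i ^ P i = z) (i : ι) [NeZero (P i)] {δ : ℤ}
    (hδ : δ.natAbs = 1) (a : NormalForm P) :
    ∃ b : NormalForm P, evalNormal x z b = x i ^ δ * evalNormal x z a ∧
      normalLength b ≤ normalLength a + 1 := by
  classical
  obtain ⟨w, k⟩ := a
  obtain ⟨w, rfl⟩ := (CoprodI.Word.equivPair i).symm.surjective w
  obtain ⟨b, e, he⟩ := exists_letterExp_add i w.head δ
  rw [CoprodI.Word.equivPair_symm]
  refine ⟨(CoprodI.Word.rcons ⟨b, w.tail, w.fstIdx_ne⟩, k + e), ?_, normalLength_rcons_le w k hδ he⟩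
  rw [evalNormal_rcons, evalNormal_rcons, evalNormal_add hz, ← mul_assoc, ← zpow_add_mul hz, ← he,
    add_comm, zpow_add, mul_assoc]

lemma exists_evalNormal_le_of_hasWord (hz : ∀ i, x i ^ P i = z) [∀ i, NeZero (P i)] {n : ℕ} {g : G}
    (hg : HasWord (insert z (Set.range x)) n g) :
    ∃ a : NormalForm P, evalNormal x z a = g ∧ normalLength a ≤ n := by
  refine exists_le_of_hasWord ⟨(.empty, 0), by simp [evalNormal, evalLetters],
    by simp [normalLength, expLength, halfCount, distNegIcc]⟩ ?_ hg
  rintro s ((rfl | ⟨i, rfl⟩) | (hs | ⟨i, hs⟩)) a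
  · simpa using exists_evalNormal_zpow_mul hz (δ := 1) rfl a
  · simpa using exists_evalNormal_generator_zpow_mul hz i (δ := 1) rfl a
  · simpa [← hs] using exists_evalNormal_zpow_mul hz (δ := -1) rfl a
  · simpa [hs] using exists_evalNormal_generator_zpow_mul hz i (δ := -1) rfl a

lemma wordLength_evalNormal (hz : ∀ i, x i ^ P i = z) [∀ i, NeZero (P i)]
    (hinj : Function.Injective (evalNormal (P := P) x z)) (a : NormalForm P) :
    wordLength (insert z (Set.range x)) (evalNormal x z a) = normalLength a := by
  refine IsLeast.csInf_eq ⟨hasWord_evalLetters_mul_zpow hz (by simp) (by simp) _ _, fun n hn => ?_⟩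
  obtain ⟨b, hb, hle⟩ := exists_evalNormal_le_of_hasWord hz hn
  exact hinj hb ▸ hle

lemma evalNormal_injective {φ : G →* CoprodI fun i => Multiplicative (ZMod (P i))}
    (hφ : ∀ i, φ (x i) = CoprodI.of (M := fun i => Multiplicative (ZMod (P i)))
      (Multiplicative.ofAdd (1 : ZMod (P i)))) (hφz : φ z = 1)
    (hz : ¬ IsOfFinOrder z) : Function.Injective (evalNormal (P := P) x z) := by
  have hφeval (w : CyclicWord P) : φ (evalLetters x w.toList) = w.prod := by
    rw [evalLetters, map_list_prod, List.map_map, CoprodI.Word.prod]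
    refine congrArg List.prod (List.map_congr_left fun s _ => ?_)
    rw [Function.comp_apply, map_zpow, hφ, ← map_zpow, ← ofAdd_zsmul, zsmul_one, letterExp,
      ZMod.coe_valMinAbs, ofAdd_toAdd]
  classical
  rintro ⟨v, k⟩ ⟨w, l⟩ h
  have hvw : v = w := by
    have := congrArg φ h
    simp only [evalNormal, map_mul, hφeval, map_zpow, hφz, one_zpow, mul_one] at this
    exact CoprodI.Word.equiv.symm.injective this
  subst hvw
  exact Prod.ext rfl (injective_zpow_iff_not_isOfFinOrder.2 hz (mul_left_cancel h))

lemma evalNormal_surjective (hz : ∀ i, x i ^ P i = z) [∀ i, NeZero (P i)]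
    (hgen : Subgroup.closure (insert z (Set.range x)) = ⊤) :
    Function.Surjective (evalNormal (P := P) x z) := fun g =>
  let ⟨_, hg⟩ := exists_hasWord hgen g
  (exists_evalNormal_le_of_hasWord hz hg).imp fun _ => And.left

end NormalForm

/-! ### The letters of a cyclic group -/

section Letters

lemma sum_pow_min_add_two {R : Type*} [CommSemiring R] (t : R) (p : ℕ) :
    ∑ j ∈ Finset.range (p + 2), t ^ min j (p + 2 - j) =
      1 + t + t * ∑ j ∈ Finset.range p, t ^ min j (p - j) := by
  have hinner : ∀ j ∈ Finset.range p,
      t ^ min (j + 1) (p + 2 - (j + 1)) = t * t ^ min j (p - j) := by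
    intro j hj
    rw [Finset.mem_range] at hj
    rw [← pow_succ']
    congr 1
    omega
  rw [Finset.sum_range_succ', Finset.sum_range_succ, Finset.sum_congr rfl hinner, ← Finset.mul_sum,
    show min (p + 1) (p + 2 - (p + 1)) = 1 by omega, Nat.zero_min, pow_one, pow_zero]
  ring

lemma Cpol_add_two {p : ℕ} (hp : p ≠ 0) :
    Cpol (p + 2) = 1 + Polynomial.X + Polynomial.X * Cpol p := by
  have hsum : ∑ k ∈ Finset.Ioo 0 ((p + 2 + 1) / 2), 2 * (Polynomial.X : Polynomial ℚ) ^ k =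
      2 * Polynomial.X +
        Polynomial.X * ∑ k ∈ Finset.Ioo 0 ((p + 1) / 2), 2 * Polynomial.X ^ k := by
    obtain ⟨m, hm⟩ : ∃ m, (p + 1) / 2 = m + 1 := ⟨(p + 1) / 2 - 1, by omega⟩
    have hIoo (n : ℕ) : Finset.Ioo 0 n = Finset.Ico 1 n := rfl
    rw [show (p + 2 + 1) / 2 = m + 1 + 1 by omega, hm, hIoo, hIoo,
      Finset.sum_eq_sum_Ico_succ_bot (by omega), ← Finset.sum_Ico_add' _ 1 (m + 1) 1,
      Finset.mul_sum, pow_one]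
    exact congrArg _ (Finset.sum_congr rfl fun k _ => by ring)
  rw [Cpol, Cpol, hsum, Nat.add_mod_right, Nat.add_div_right p two_pos]
  split_ifs <;> ring

lemma sum_pow_min_eq_Cpol (n : ℕ) :
    ∑ j ∈ Finset.range (n + 1), Polynomial.X ^ min j (n + 1 - j) = Cpol (n + 1) := by
  induction n using Nat.twoStepInduction with
  | zero => simp [Cpol, show Finset.Ioo 0 1 = ∅ from rfl]
  | one => simp [Cpol, show Finset.Ioo 0 1 = ∅ from rfl, Finset.sum_range_succ]
  | more n ih _ => rw [sum_pow_min_add_two, Cpol_add_two n.succ_ne_zero, ih]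

lemma sum_zmod_val {R : Type*} [AddCommMonoid R] (p : ℕ) [NeZero p] (f : ℕ → R) :
    ∑ a : ZMod p, f a.val = ∑ j ∈ Finset.range p, f j := by
  obtain ⟨n, rfl⟩ := Nat.exists_eq_succ_of_ne_zero (NeZero.ne p)
  exact (Finset.sum_range f).symm

variable {ι : Type*} {P : ι → ℕ}

lemma sum_X_pow_letterExp (i : ι) [NeZero (P i)] :
    ∑ a, (X : ℚ⟦X⟧) ^ (letterExp (P := P) ⟨i, a⟩).natAbs = Cpol (P i) := by
  obtain ⟨n, hn⟩ := Nat.exists_eq_succ_of_ne_zero (NeZero.ne (P i))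
  calc
    _ = ∑ a : ZMod (P i), (X : ℚ⟦X⟧) ^ min a.val (P i - a.val) :=
      Fintype.sum_equiv Multiplicative.toAdd _ _ fun a => by
        rw [letterExp, ZMod.valMinAbs_natAbs_eq_min]
    _ = ∑ j ∈ Finset.range (P i), (X : ℚ⟦X⟧) ^ min j (P i - j) :=
      sum_zmod_val (P i) fun j => X ^ min j (P i - j)
    _ = Polynomial.coeToPowerSeries.ringHom
          (∑ j ∈ Finset.range (P i), Polynomial.X ^ min j (P i - j)) := by simp
    _ = Cpol (P i) := by rw [hn, sum_pow_min_eq_Cpol, Polynomial.coeToPowerSeries.ringHom_apply]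

lemma sum_letterHalf_mul_X_pow (i : ι) [NeZero (P i)] :
    ∑ a, (letterHalf (P := P) ⟨i, a⟩ : ℚ⟦X⟧) * X ^ (letterExp (P := P) ⟨i, a⟩).natAbs =
      mser (P i) := by
  calc
    _ = ∑ a : ZMod (P i), if 2 * a.val = P i then (X : ℚ⟦X⟧) ^ (P i / 2) else 0 := by
      refine Fintype.sum_equiv Multiplicative.toAdd _ _ fun a => ?_
      simp only [letterHalf, letterExp, ZMod.valMinAbs_mul_two_eq_iff,
        ZMod.valMinAbs_natAbs_eq_min]
      split_ifs with h
      · rw [Nat.cast_one, one_mul, show min a.toAdd.val (P i - a.toAdd.val) = P i / 2 by omega]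
      · rw [Nat.cast_zero, zero_mul]
    _ = ∑ j ∈ Finset.range (P i), if 2 * j = P i then (X : ℚ⟦X⟧) ^ (P i / 2) else 0 :=
      sum_zmod_val (P i) fun j => if 2 * j = P i then X ^ (P i / 2) else 0
    _ = mser (P i) := by
      have hlt : P i / 2 < P i := Nat.div_lt_self (NeZero.pos (P i)) one_lt_two
      rw [mser]
      split_ifs with heven
      · have hhalf (j : ℕ) : 2 * j = P i ↔ P i / 2 = j := by omega
        simp only [hhalf, Finset.sum_ite_eq, Finset.mem_range, if_pos hlt]
      · exact Finset.sum_eq_zero fun j _ => if_neg (by omega)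

end Letters

/-! ### The growth series -/

section Series

variable {ι : Type*}

/-- The generating series `F = ∑ t ^ |w|` of the reduced words. -/
noncomputable def wordSeries (P : ι → ℕ) : ℚ⟦X⟧ := ∑' w : CyclicWord P, X ^ expLength w.toList

/-- The generating series `M = ∑ h(w) t ^ |w|` of the half-order letters of the reduced words. -/
noncomputable def halfSeries (P : ι → ℕ) : ℚ⟦X⟧ :=
  ∑' w : CyclicWord P, (halfCount w.toList : ℚ⟦X⟧) * X ^ expLength w.toList

variable {P : ι → ℕ}

lemma length_le_expLength (w : CyclicWord P) : w.toList.length ≤ expLength w.toList := by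
  rw [expLength, ← List.length_map (as := w.toList) fun s => (letterExp s).natAbs]
  refine List.length_le_sum_of_one_le _ fun n hn => ?_
  obtain ⟨⟨i, a⟩, hs, rfl⟩ := List.mem_map.1 hn
  have hne : a.toAdd.valMinAbs ≠ 0 := by simpa using w.ne_one _ hs
  exact Int.natAbs_pos.2 hne

/-- The letter weight `(1 + h ε) t ^ |a|` over the dual numbers. The `ε`-part of a product of such
weights counts half-order letters. -/
noncomputable def letterWeight (s : Letter P) : ℚ⟦X⟧[ε] :=
  inl (X ^ (letterExp s).natAbs) + inr ((letterHalf s : ℚ⟦X⟧) * X ^ (letterExp s).natAbs)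

lemma prod_map_letterWeight (l : List (Letter P)) : (l.map letterWeight).prod =
    inl (X ^ expLength l) + inr ((halfCount l : ℚ⟦X⟧) * X ^ expLength l) := by
  induction l with
  | nil => simp [expLength, halfCount]
  | cons s l ih =>
    rw [List.map_cons, List.prod_cons, ih]
    apply TrivSqZeroExt.ext
    · simp [letterWeight, expLength, pow_add]
    · simp only [letterWeight, expLength, halfCount, List.map_cons, List.sum_cons, snd_mul, fst_add,
        fst_inl, fst_inr, snd_add, snd_inl, snd_inr, smul_eq_mul, MulOpposite.smul_eq_mul_unop,
        MulOpposite.unop_op, Nat.cast_add, pow_add]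
      ring

lemma letterWeight_one (i : ι) [NeZero (P i)] : letterWeight (P := P) ⟨i, 1⟩ = 1 := by
  simp [letterWeight, letterExp_one, letterHalf_one]

lemma sum_letterWeight (i : ι) [NeZero (P i)] :
    ∑ a, letterWeight (P := P) ⟨i, a⟩ = inl (Cpol (P i) : ℚ⟦X⟧) + inr (mser (P i)) := by
  simp only [letterWeight, Finset.sum_add_distrib]
  rw [← sum_X_pow_letterExp, ← sum_letterHalf_mul_X_pow, inl_sum, inr_sum]

variable [Finite ι] [∀ i, NeZero (P i)]

instance tendstoCofinite_expLength :
    TendstoCofinite fun w : CyclicWord P => expLength w.toList := by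
  refine (tendstoCofinite_iff_finite_preimage_singleton _).2 fun n => ?_
  have hinj : Function.Injective fun w : CyclicWord P => w.toList := fun _ _ => CoprodI.Word.ext
  exact ((List.finite_length_le (Letter P) n).preimage hinj.injOn).subset
    fun w hw => (length_le_expLength w).trans_eq hw

lemma hasSum_wordSeries :
    HasSum (fun w : CyclicWord P => (X : ℚ⟦X⟧) ^ expLength w.toList) (wordSeries P) :=
  (summable_X_pow _).hasSum

lemma hasSum_halfSeries :
    HasSum (fun w : CyclicWord P => (halfCount w.toList : ℚ⟦X⟧) * X ^ expLength w.toList)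
      (halfSeries P) :=
  (summable_natCast_mul_X_pow _ _).hasSum

lemma growthSeries_eq {G : Type*} [Group G] {x : ι → G} {z : G} (hz : ∀ i, x i ^ P i = z)
    (hgen : Subgroup.closure (insert z (Set.range x)) = ⊤)
    (hinj : Function.Injective (evalNormal (P := P) x z)) :
    growthSeries (insert z (Set.range x)) = (1 + X) * mk 1 * wordSeries P + halfSeries P := by
  have := tendstoCofinite_wordLength ((Set.finite_range x).insert z) hgen
  have hnormal : HasSum (fun a : NormalForm P => (X : ℚ⟦X⟧) ^ normalLength a)
      (growthSeries (insert z (Set.range x))) := by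
    let e : NormalForm P ≃ G := .ofBijective _ ⟨hinj, evalNormal_surjective hz hgen⟩
    have he (a : NormalForm P) : wordLength (insert z (Set.range x)) (e a) = normalLength a :=
      wordLength_evalNormal hz hinj a
    simpa only [Function.comp_def, he] using
      e.hasSum_iff.2 (hasSum_growthSeries (insert z (Set.range x)))
  have hfiber (w : CyclicWord P) : HasSum (fun k : ℤ => (X : ℚ⟦X⟧) ^ normalLength (w, k))
      ((1 + X) * mk 1 * X ^ expLength w.toList +
        (halfCount w.toList : ℚ⟦X⟧) * X ^ expLength w.toList) := by
    rw [← add_mul, mul_comm]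
    simp only [normalLength, pow_add]
    exact HasSum.mul_left _ (hasSum_X_pow_distNegIcc _)
  exact (hnormal.prod_fiberwise hfiber).unique
    ((HasSum.mul_left _ hasSum_wordSeries).add hasSum_halfSeries)

lemma hasSum_prod_letterWeight {α : Type*} {f : α → CyclicWord P} (hf : Function.Injective f) :
    HasSum (fun a => ((f a).toList.map letterWeight).prod)
      (inl (∑' a, X ^ expLength (f a).toList) +
        inr (∑' a, (halfCount (f a).toList : ℚ⟦X⟧) * X ^ expLength (f a).toList)) := by
  have := tendstoCofinite_of_injective hf
  have : TendstoCofinite fun a => expLength (f a).toList :=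
    TendstoCofinite.comp f fun w : CyclicWord P => expLength w.toList
  simp only [prod_map_letterWeight]
  exact (hasSum_inl _ (summable_X_pow _).hasSum).add
    (hasSum_inr _ (summable_natCast_mul_X_pow _ _).hasSum)

end Series

section TwoFactors

variable {P : Bool → ℕ} [∀ i, NeZero (P i)]

lemma dual_wordSeries_mul {c : Bool → ℚ⟦X⟧[ε]}
    (hc : ∀ i, c i = inl (Cpol (P i) : ℚ⟦X⟧) + inr (mser (P i))) :
    (inl (wordSeries P) + inr (halfSeries P)) * (c false + c true - c false * c true) =
      c false * c true := by
  refine mul_eq_mul_of_hasSum_words (fun i => letterWeight_one i)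
    (hasSum_prod_letterWeight Function.injective_id)
    (fun i => (hasSum_prod_letterWeight Subtype.val_injective).summable) fun i => ?_
  rw [hc, ← sum_letterWeight]
  exact hasSum_fintype _

variable (P)

lemma wordSeries_mul :
    wordSeries P * (Cpol (P false) + Cpol (P true) - Cpol (P false) * Cpol (P true)) =
      Cpol (P false) * Cpol (P true) := by
  simpa using congrArg fst (dual_wordSeries_mul (P := P) fun _ => rfl)

lemma halfSeries_mul_sq :
    halfSeries P * (Cpol (P false) + Cpol (P true) - Cpol (P false) * Cpol (P true)) ^ 2 =
      mser (P true) * Cpol (P false) ^ 2 + mser (P false) * Cpol (P true) ^ 2 := by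
  have hsnd : wordSeries P * (mser (P false) + mser (P true) -
          (Cpol (P false) * mser (P true) + mser (P false) * Cpol (P true))) +
        halfSeries P * (Cpol (P false) + Cpol (P true) - Cpol (P false) * Cpol (P true)) =
      Cpol (P false) * mser (P true) + mser (P false) * Cpol (P true) := by
    simpa using congrArg snd (dual_wordSeries_mul (P := P) fun _ => rfl)
  linear_combination
    (Cpol (P false) + Cpol (P true) - Cpol (P false) * Cpol (P true) : ℚ⟦X⟧) * hsnd -
      (mser (P false) + mser (P true) -
        (Cpol (P false) * mser (P true) + mser (P false) * Cpol (P true))) * wordSeries_mul P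

end TwoFactors

/-! ### The presented group -/

section Presentation

/-- The orders `p` and `q` of the two cyclic factors of `T'_{p,q} / ⟨z⟩`. -/
def factorOrder (p q : ℕ) (i : Bool) : ℕ := bif i then q else p

/-- The generators `x` and `y` of `T'_{p,q}`, indexed like the cyclic factors. -/
def factorGen (p q : ℕ) (i : Bool) : PresentedGroup (torusRels p q) :=
  bif i then PresentedGroup.of 1 else PresentedGroup.of 0

variable (p q : ℕ)

lemma factorGen_pow (i : Bool) :
    factorGen p q i ^ factorOrder p q i = PresentedGroup.of 2 := by
  rw [← mul_inv_eq_one]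
  cases i
  · exact PresentedGroup.one_of_mem (rels := torusRels p q) (.inl rfl)
  · exact PresentedGroup.one_of_mem (rels := torusRels p q) (.inr rfl)

lemma insert_range_factorGen : insert (PresentedGroup.of 2) (Set.range (factorGen p q)) =
    {PresentedGroup.of 0, PresentedGroup.of 1, PresentedGroup.of 2} := by
  ext g
  simp only [Set.mem_insert_iff, Set.mem_range, Bool.exists_bool, factorGen, cond_false, cond_true,
    Set.mem_singleton_iff, eq_comm (b := g)]
  tauto

lemma closure_insert_range_factorGen :
    Subgroup.closure (insert (PresentedGroup.of 2) (Set.range (factorGen p q))) = ⊤ := by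
  rw [insert_range_factorGen, ← PresentedGroup.closure_range_of]
  congr 1
  ext g
  simp [Fin.exists_fin_succ, eq_comm (b := g)]

lemma lift_eq_one_of_mem_torusRels {p q : ℕ} {H : Type*} [Group H] {x y z : H} (hx : x ^ p = z)
    (hy : y ^ q = z) : ∀ r ∈ torusRels p q, FreeGroup.lift ![x, y, z] r = 1 := by
  rintro r (rfl | rfl) <;> simp [hx, hy]

lemma exists_hom_coprodI :
    ∃ φ : PresentedGroup (torusRels p q) →*
        CoprodI fun i => Multiplicative (ZMod (factorOrder p q i)),
      (∀ i, φ (factorGen p q i) =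
        CoprodI.of (M := fun i => Multiplicative (ZMod (factorOrder p q i)))
          (Multiplicative.ofAdd (1 : ZMod (factorOrder p q i)))) ∧
      φ (PresentedGroup.of 2) = 1 := by
  have hpow (i : Bool) : CoprodI.of (M := fun i => Multiplicative (ZMod (factorOrder p q i)))
      (Multiplicative.ofAdd (1 : ZMod (factorOrder p q i))) ^ factorOrder p q i = 1 := by
    rw [← map_pow, ← ofAdd_nsmul, nsmul_one, ZMod.natCast_self, ofAdd_zero, map_one]
  have hrels := lift_eq_one_of_mem_torusRels (hpow false) (hpow true)
  refine ⟨PresentedGroup.toGroup hrels, ?_, PresentedGroup.toGroup.of hrels⟩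
  rintro (_ | _) <;> exact PresentedGroup.toGroup.of hrels

variable {p q}

lemma not_isOfFinOrder_of_two (hp : p ≠ 0) (hq : q ≠ 0) :
    ¬ IsOfFinOrder (PresentedGroup.of 2 : PresentedGroup (torusRels p q)) := by
  have hx : Multiplicative.ofAdd (q : ℤ) ^ p = Multiplicative.ofAdd (p * q : ℤ) := by
    rw [← ofAdd_nsmul, nsmul_eq_mul]
  have hy : Multiplicative.ofAdd (p : ℤ) ^ q = Multiplicative.ofAdd (p * q : ℤ) := by
    rw [← ofAdd_nsmul, nsmul_eq_mul, mul_comm]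
  have hrels := lift_eq_one_of_mem_torusRels hx hy
  intro hfin
  have hdeg := (isOfFinOrder_iff_eq_one _).1 ((PresentedGroup.toGroup hrels).isOfFinOrder hfin)
  have hpq : (p * q : ℤ) = 0 :=
    ofAdd_eq_one.1 ((PresentedGroup.toGroup.of hrels).symm.trans hdeg)
  simp [hp, hq] at hpq

lemma evalNormal_factorGen_injective (hp : p ≠ 0) (hq : q ≠ 0) :
    Function.Injective
      (evalNormal (P := factorOrder p q) (factorGen p q) (PresentedGroup.of 2)) :=
  let ⟨_, hφ, hφz⟩ := exists_hom_coprodI p q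
  evalNormal_injective hφ hφz (not_isOfFinOrder_of_two hp hq)

end Presentation

end TorusGrowth

open TorusGrowth

/-- Main theorem: for any `p, q > 1`, the growth series `A` of `T'_{p,q}` with
respect to `{x, y, z}` satisfies
`A = C_∞ C_p C_q / (C_p+C_q-C_p C_q) + (m_q C_p² + m_p C_q²)/(C_p+C_q-C_p C_q)²`,
stated multiplied out by `(1-t)(C_p+C_q-C_p C_q)²`. -/
theorem stmt_11 (p q : ℕ) (hp : 1 < p) (hq : 1 < q) :
    (1 - PowerSeries.X) *
        ((Cpol p : PowerSeries ℚ) + (Cpol q : PowerSeries ℚ) -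
          (Cpol p : PowerSeries ℚ) * (Cpol q : PowerSeries ℚ)) ^ 2 *
        growthSeries ({PresentedGroup.of 0, PresentedGroup.of 1, PresentedGroup.of 2} :
          Set (PresentedGroup (torusRels p q))) =
      (1 + PowerSeries.X) * (Cpol p : PowerSeries ℚ) * (Cpol q : PowerSeries ℚ) *
          ((Cpol p : PowerSeries ℚ) + (Cpol q : PowerSeries ℚ) -
            (Cpol p : PowerSeries ℚ) * (Cpol q : PowerSeries ℚ)) +
        (1 - PowerSeries.X) *
          (mser q * (Cpol p : PowerSeries ℚ) ^ 2 +
            mser p * (Cpol q : PowerSeries ℚ) ^ 2) := by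
  have hp' : p ≠ 0 := by omega
  have hq' : q ≠ 0 := by omega
  have (i : Bool) : NeZero (factorOrder p q i) := ⟨by cases i <;> assumption⟩
  have hgrowth := growthSeries_eq (factorGen_pow p q) (closure_insert_range_factorGen p q)
    (evalNormal_factorGen_injective hp' hq')
  rw [insert_range_factorGen] at hgrowth
  have hword : wordSeries (factorOrder p q) * (Cpol p + Cpol q - Cpol p * Cpol q) =
    Cpol p * Cpol q := wordSeries_mul _
  have hhalf : halfSeries (factorOrder p q) * (Cpol p + Cpol q - Cpol p * Cpol q) ^ 2 =
    mser q * Cpol p ^ 2 + mser p * Cpol q ^ 2 := halfSeries_mul_sq _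
  have hgeom : (PowerSeries.mk 1 : ℚ⟦X⟧) * (1 - X) = 1 := mk_one_mul_one_sub_eq_one ℚ
  rw [hgrowth]
  linear_combination
    (1 + X) * wordSeries (factorOrder p q) * (Cpol p + Cpol q - Cpol p * Cpol q) ^ 2 * hgeom +
      (1 + X) * (Cpol p + Cpol q - Cpol p * Cpol q) * hword + (1 - X) * hhalf
end
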